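/- arXiv:1309.1974 — 2 statements merged into one kernel-verified Lean document; each statement's English description precedes it below -/
import Mathlib

section
/- Let 1 ≤ n < α, let p ∈ (n/α, 1), and let q be defined by 1/q = 1/p − α/n (so q < 0). Then there exists a constant C = C(n, α, p) > 0 such that for all nonnegative f ∈ L^p(ℝⁿ), ‖I_α f‖_{L^q(ℝⁿ)} ≥ C‖f‖_{L^p(ℝⁿ)}. -/
open MeasureTheory ENNReal

/-- The Riesz-type integral operator `I_α f(x) = ∫_{ℝⁿ} f(y) |x-y|^(α-n) dy` for `α > n`,
valued in `ℝ≥0∞`. -/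
noncomputable def rieszNeg (n : ℕ) (α : ℝ) (f : EuclideanSpace ℝ (Fin n) → ℝ)
    (x : EuclideanSpace ℝ (Fin n)) : ℝ≥0∞ :=
  ∫⁻ y, ENNReal.ofReal (f y * dist x y ^ (α - n))

/-!
By the reverse Hölder inequality, `‖f‖_p ‖w‖_s ≤ ∫ f w` whenever `1/p + 1/s = 1`. Take for `w` the
weight `m + A |x₀ - x| ^ l`, where `l = α - n`, `A = ∫ f` and `m = I_α f(x₀)`, so that
`∫ f w = 2 m A`. Dilating `w` to `1 + |x| ^ l` evaluates both `‖w‖_s` and `‖w‖_q` as constants times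
powers of `m` and `A`, and since `1/q + 1/s = -l/n` the powers combine to `‖f‖_p ≤ C ‖w‖_q`. If `x₀`
minimizes `I_α f` up to a factor `2`, the triangle inequality gives `w ≤ C I_α f`, hence
`‖w‖_q ≤ C ‖I_α f‖_q`.
-/

section ExtendedNonnegativeReals

lemma rpow_antitone_of_nonpos {z : ℝ} (hz : z ≤ 0) : Antitone fun a : ℝ≥0∞ => a ^ z := by
  intro a b hab
  have h := ENNReal.rpow_le_rpow hab (neg_nonneg.2 hz)
  rwa [ENNReal.rpow_neg, ENNReal.rpow_neg, ENNReal.inv_le_inv] at h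

lemma mul_rpow_of_ne_zero_of_ne_top {c : ℝ≥0∞} (hc : c ≠ 0) (hc' : c ≠ ⊤) (a : ℝ≥0∞) (z : ℝ) :
    (c * a) ^ z = c ^ z * a ^ z := by
  rcases eq_or_ne a ⊤ with rfl | ha
  · rcases lt_trichotomy z 0 with hz | rfl | hz
    · simp [ENNReal.mul_top hc, ENNReal.top_rpow_of_neg hz]
    · simp
    · simp [ENNReal.mul_top hc, ENNReal.top_rpow_of_pos hz, ENNReal.mul_top, hc, hc']
  · exact ENNReal.mul_rpow_of_ne_top hc' ha z

lemma exists_forall_le_two_mul {ι : Type*} [Nonempty ι] {g : ι → ℝ≥0∞} (hg : ⨅ i, g i ≠ 0) :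
    ∃ i, ∀ j, g i ≤ 2 * g j := by
  by_cases htop : ⨅ i, g i = ⊤
  · refine ‹Nonempty ι›.elim fun i => ⟨i, fun j => ?_⟩
    simp [iInf_eq_top.1 htop j]
  · have hlt : ⨅ i, g i < 2 * ⨅ i, g i := by
      simpa using ENNReal.mul_lt_mul_left hg htop (show (1 : ℝ≥0∞) < 2 by norm_num)
    obtain ⟨i, hi⟩ := iInf_lt_iff.1 hlt
    exact ⟨i, fun j => hi.le.trans (by gcongr; exact iInf_le g j)⟩

end ExtendedNonnegativeReals

section NegativeExponents

variable {X : Type*} [MeasurableSpace X] {μ : Measure X} {f g w : X → ℝ≥0∞} {p s : ℝ}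

lemma eLpNorm'_mono_of_nonpos (hs : s ≤ 0) (hfg : ∀ x, f x ≤ g x) :
    eLpNorm' f s μ ≤ eLpNorm' g s μ :=
  rpow_antitone_of_nonpos (one_div_nonpos.2 hs)
    (lintegral_mono fun x => rpow_antitone_of_nonpos hs (hfg x))

lemma eLpNorm'_const_mul_of_ne_zero (hs : s ≠ 0) {c : ℝ≥0∞} (hc : c ≠ 0) (hc' : c ≠ ⊤)
    (hg : AEMeasurable g μ) : eLpNorm' (fun x => c * g x) s μ = c * eLpNorm' g s μ := by
  simp only [eLpNorm', enorm_eq_self, mul_rpow_of_ne_zero_of_ne_top hc hc']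
  rw [lintegral_const_mul'' _ (hg.pow_const s), mul_rpow_of_ne_zero_of_ne_top
    (ENNReal.rpow_pos hc.bot_lt hc').ne' (ENNReal.rpow_ne_top_of_ne_zero hc hc'),
    ← ENNReal.rpow_mul, mul_one_div_cancel hs, ENNReal.rpow_one]

lemma eLpNorm'_eq_top_of_ae_eq_top (hs : s < 0) (hg : ∀ᵐ x ∂μ, g x = ⊤) :
    eLpNorm' g s μ = ⊤ := by
  have hzero : ∫⁻ x, ‖g x‖ₑ ^ s ∂μ = 0 := by
    rw [← lintegral_zero (μ := μ)]
    refine lintegral_congr_ae (hg.mono fun x hx => ?_)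
    simp [hx, ENNReal.top_rpow_of_neg hs]
  rw [eLpNorm', hzero, ENNReal.zero_rpow_of_neg (one_div_neg.2 hs)]

lemma conjugateExponent_ne_zero (hp0 : p ≠ 0) (hp1 : p ≠ 1) (hps : 1 / p + 1 / s = 1) :
    s ≠ 0 := by
  rintro rfl
  rw [_root_.div_zero, add_zero, div_eq_one_iff_eq hp0] at hps
  exact hp1 hps.symm

theorem eLpNorm'_mul_eLpNorm'_le_lintegral_mul (hp0 : 0 < p) (hp1 : p < 1)
    (hps : 1 / p + 1 / s = 1) (hf : AEMeasurable f μ) (hw : AEMeasurable w μ)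
    (hw0 : ∀ᵐ x ∂μ, w x ≠ 0) (hwtop : ∀ᵐ x ∂μ, w x ≠ ⊤) :
    eLpNorm' f p μ * eLpNorm' w s μ ≤ ∫⁻ x, f x * w x ∂μ := by
  have hs0 : s ≠ 0 := conjugateExponent_ne_zero hp0.ne' hp1.ne hps
  have hps' : s * (1 - p) = -p := by field_simp at hps; linarith
  have hfactor : ∫⁻ x, f x ^ p ∂μ = ∫⁻ x, (f x * w x) ^ p * (w x ^ s) ^ (1 - p) ∂μ := by
    refine lintegral_congr_ae ?_
    filter_upwards [hw0, hwtop] with x hx0 hxtop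
    rw [← ENNReal.rpow_mul, hps', ENNReal.mul_rpow_of_nonneg _ _ hp0.le, mul_assoc,
      ← ENNReal.rpow_add _ _ hx0 hxtop, add_neg_cancel, ENNReal.rpow_zero, mul_one]
  have hholder : ∫⁻ x, f x ^ p ∂μ ≤
      (∫⁻ x, f x * w x ∂μ) ^ p * (∫⁻ x, w x ^ s ∂μ) ^ (1 - p) :=
    hfactor.trans_le <| ENNReal.lintegral_mul_norm_pow_le (hf.mul hw) (hw.pow_const s) hp0.le
      (sub_nonneg.2 hp1.le) (add_sub_cancel p 1)
  have hexp : (1 - p) * (1 / p) = -(1 / s) := by field_simp at hps ⊢; linarith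
  have hroot : eLpNorm' f p μ ≤ (∫⁻ x, f x * w x ∂μ) * (eLpNorm' w s μ)⁻¹ := by
    have h := ENNReal.rpow_le_rpow hholder (one_div_pos.2 hp0).le
    rwa [ENNReal.mul_rpow_of_nonneg _ _ (one_div_pos.2 hp0).le, ← ENNReal.rpow_mul,
      ← ENNReal.rpow_mul, mul_one_div_cancel hp0.ne', ENNReal.rpow_one, hexp,
      ENNReal.rpow_neg] at h
  calc eLpNorm' f p μ * eLpNorm' w s μ
      ≤ (∫⁻ x, f x * w x ∂μ) * ((eLpNorm' w s μ)⁻¹ * eLpNorm' w s μ) := by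
        rw [← mul_assoc]; gcongr
    _ ≤ ∫⁻ x, f x * w x ∂μ := mul_le_of_le_one_right' (ENNReal.inv_mul_le_one _)

end NegativeExponents

section RadialWeight

/-- The weight `m + A |x₀ - x| ^ l`, to which the potential of a function of mass `A` is
comparable when `m` is its value at a near-minimizer `x₀`. -/
noncomputable def radialWeight {X : Type*} [EDist X] (l : ℝ) (m A : ℝ≥0∞) (x₀ x : X) : ℝ≥0∞ :=
  m + A * edist x₀ x ^ l

lemma radialWeight_ne_zero {X : Type*} [EDist X] {l : ℝ} {m A : ℝ≥0∞} (hm : m ≠ 0) (x₀ x : X) :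
    radialWeight l m A x₀ x ≠ 0 :=
  ne_bot_of_le_ne_bot hm le_self_add

lemma radialWeight_ne_top {X : Type*} [PseudoMetricSpace X] {l : ℝ} {m A : ℝ≥0∞} (hl : 0 ≤ l)
    (hm : m ≠ ⊤) (hA : A ≠ ⊤) (x₀ x : X) : radialWeight l m A x₀ x ≠ ⊤ :=
  ENNReal.add_ne_top.2 ⟨hm, ENNReal.mul_ne_top hA
    (ENNReal.rpow_ne_top_of_nonneg hl (edist_ne_top x₀ x))⟩

lemma measurable_radialWeight {X : Type*} [PseudoEMetricSpace X] [MeasurableSpace X]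
    [OpensMeasurableSpace X] (l : ℝ) (m A : ℝ≥0∞) (x₀ : X) :
    Measurable (radialWeight l m A x₀) :=
  ((measurable_edist_right.pow_const l).const_mul A).const_add m

lemma lintegral_radialWeight_rpow_ne_zero {X : Type*} [PseudoMetricSpace X] [MeasurableSpace X]
    [OpensMeasurableSpace X] (μ : Measure X) [NeZero μ] {l : ℝ} {m A : ℝ≥0∞} (hl : 0 ≤ l)
    (hm : m ≠ 0) (hm' : m ≠ ⊤) (hA : A ≠ ⊤) (x₀ : X) (s : ℝ) :
    ∫⁻ x, radialWeight l m A x₀ x ^ s ∂μ ≠ 0 := by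
  intro hzero
  rw [lintegral_eq_zero_iff ((measurable_radialWeight l m A x₀).pow_const s)] at hzero
  obtain ⟨x, hx⟩ := hzero.exists
  exact (ENNReal.rpow_pos (radialWeight_ne_zero hm x₀ x).bot_lt
    (radialWeight_ne_top hl hm' hA x₀ x)).ne' hx

variable {E : Type*} [NormedAddCommGroup E]

lemma radialWeight_zero_left (l : ℝ) (m A : ℝ≥0∞) (x : E) :
    radialWeight l m A 0 x = m + A * ‖x‖ₑ ^ l := by
  rw [radialWeight, edist_comm, edist_zero_right]

variable [NormedSpace ℝ E]

lemma radialWeight_add_smul {l : ℝ} (hl : 0 < l) {m A : ℝ≥0∞} (hm : m ≠ ⊤)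
    (hA : A ≠ 0) (hA' : A ≠ ⊤) (x₀ z : E) :
    radialWeight l m A x₀ (x₀ + ((m / A) ^ l⁻¹).toReal • z) = m * radialWeight l 1 1 0 z := by
  have hscale : edist x₀ (x₀ + ((m / A) ^ l⁻¹).toReal • z) = (m / A) ^ l⁻¹ * ‖z‖ₑ := by
    rw [edist_comm, edist_eq_enorm_sub, add_sub_cancel_left, enorm_smul,
      Real.enorm_of_nonneg ENNReal.toReal_nonneg, ENNReal.ofReal_toReal
        (ENNReal.rpow_ne_top_of_nonneg (inv_nonneg.2 hl.le) (ENNReal.div_ne_top hm hA))]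
  rw [radialWeight_zero_left, radialWeight, hscale, ENNReal.mul_rpow_of_nonneg _ _ hl.le,
    ENNReal.rpow_inv_rpow hl.ne', ← mul_assoc, ENNReal.mul_div_cancel hA hA',
    one_mul, mul_add, mul_one]

variable [FiniteDimensional ℝ E] [MeasurableSpace E] [BorelSpace E] (μ : Measure E)
  [μ.IsAddHaarMeasure]

local notation "d" => (Module.finrank ℝ E : ℝ)

lemma lintegral_comp_add_smul (x₀ : E) {r : ℝ} (hr : r ≠ 0) (g : E → ℝ≥0∞) :
    ∫⁻ z, g (x₀ + r • z) ∂μ =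
      ENNReal.ofReal |(r ^ Module.finrank ℝ E)⁻¹| * ∫⁻ x, g x ∂μ := by
  have hmap : ∫⁻ z, g (x₀ + r • z) ∂μ = ∫⁻ x, g (x₀ + x) ∂μ.map (r • ·) :=
    ((Homeomorph.smulOfNeZero r hr).measurableEmbedding.lintegral_map fun x => g (x₀ + x)).symm
  rw [hmap, Measure.map_addHaar_smul μ hr, lintegral_smul_measure, lintegral_add_left_eq_self,
    smul_eq_mul]

lemma eLpNorm'_eq_rpow_mul_eLpNorm'_comp_add_smul (x₀ : E) {r : ℝ} (hr : 0 < r)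
    (g : E → ℝ≥0∞) (s : ℝ) :
    eLpNorm' g s μ = ENNReal.ofReal r ^ (d / s) * eLpNorm' (fun z => g (x₀ + r • z)) s μ := by
  have hr0 : ENNReal.ofReal r ≠ 0 := (ENNReal.ofReal_pos.2 hr).ne'
  have hjacobian : ENNReal.ofReal |(r ^ Module.finrank ℝ E)⁻¹| = ENNReal.ofReal r ^ (-d) := by
    rw [abs_of_pos (by positivity), ENNReal.ofReal_inv_of_pos (by positivity),
      ENNReal.ofReal_pow hr.le, ENNReal.rpow_neg, ENNReal.rpow_natCast]
  simp only [eLpNorm', enorm_eq_self]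
  rw [lintegral_comp_add_smul μ x₀ hr.ne' fun x => g x ^ s, hjacobian,
    mul_rpow_of_ne_zero_of_ne_top (ENNReal.rpow_pos hr0.bot_lt ENNReal.ofReal_ne_top).ne'
      (ENNReal.rpow_ne_top_of_ne_zero hr0 ENNReal.ofReal_ne_top),
    ← ENNReal.rpow_mul, ← mul_assoc, ← ENNReal.rpow_add _ _ hr0 ENNReal.ofReal_ne_top,
    neg_mul, mul_one_div, add_neg_cancel, ENNReal.rpow_zero, one_mul]

lemma lintegral_radialWeight_one_rpow_ne_top {l s : ℝ} (hl : 0 < l) (hls : l * s < -d) :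
    ∫⁻ x : E, radialWeight l 1 1 0 x ^ s ∂μ ≠ ⊤ := by
  have hs : s ≤ 0 := by
    by_contra! hs
    linarith [mul_pos hl hs, (Module.finrank ℝ E).cast_nonneg (α := ℝ)]
  have hcompare (x : E) : radialWeight l 1 1 0 x ^ s ≤
      (2 ^ (-l)) ^ s * ENNReal.ofReal ((1 + ‖x‖) ^ (-(-(l * s)))) := by
    have hpow : ENNReal.ofReal (1 + ‖x‖) ^ l ≤ 2 ^ l * radialWeight l 1 1 0 x := by
      simpa [radialWeight_zero_left, ENNReal.ofReal_add, ofReal_norm] using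
        ENNReal.add_rpow_le_two_rpow_mul_rpow_add_rpow 1 ‖x‖ₑ hl.le
    calc radialWeight l 1 1 0 x ^ s
        ≤ (2 ^ (-l) * ENNReal.ofReal (1 + ‖x‖) ^ l) ^ s := by
          refine rpow_antitone_of_nonpos hs ?_
          rwa [ENNReal.rpow_neg, mul_comm, ← div_eq_mul_inv,
            ENNReal.div_le_iff' (by simp) (by simp)]
      _ = (2 ^ (-l)) ^ s * ENNReal.ofReal ((1 + ‖x‖) ^ (-(-(l * s)))) := by
          rw [neg_neg, mul_rpow_of_ne_zero_of_ne_top (by simp) (by simp), ← ENNReal.rpow_mul _ l s,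
            ENNReal.ofReal_rpow_of_pos (by positivity)]
  refine ne_top_of_le_ne_top ?_ (lintegral_mono hcompare)
  rw [lintegral_const_mul _ (by fun_prop)]
  exact ENNReal.mul_ne_top (by simp) (finite_integral_one_add_norm (by linarith)).ne

lemma eLpNorm'_radialWeight_one_ne_zero {l s : ℝ} (hl : 0 < l) (hls : l * s < -d) :
    eLpNorm' (radialWeight l 1 1 (0 : E)) s μ ≠ 0 :=
  (ENNReal.rpow_pos (lintegral_radialWeight_rpow_ne_zero μ hl.le one_ne_zero
    ENNReal.one_ne_top ENNReal.one_ne_top 0 s).bot_lt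
    (lintegral_radialWeight_one_rpow_ne_top μ hl hls)).ne'

lemma eLpNorm'_radialWeight_one_ne_top {l s : ℝ} (hl : 0 < l) (hls : l * s < -d) :
    eLpNorm' (radialWeight l 1 1 (0 : E)) s μ ≠ ⊤ :=
  ENNReal.rpow_ne_top_of_ne_zero (lintegral_radialWeight_rpow_ne_zero μ hl.le one_ne_zero
    ENNReal.one_ne_top ENNReal.one_ne_top 0 s)
    (lintegral_radialWeight_one_rpow_ne_top μ hl hls)

theorem eLpNorm'_radialWeight {l s : ℝ} (hl : 0 < l) (hs : s ≠ 0) {m A : ℝ≥0∞} (hm : m ≠ 0)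
    (hm' : m ≠ ⊤) (hA : A ≠ 0) (hA' : A ≠ ⊤) (x₀ : E) :
    eLpNorm' (radialWeight l m A x₀) s μ =
      eLpNorm' (radialWeight l 1 1 (0 : E)) s μ *
        (m ^ (1 + d / (l * s)) * A ^ (-(d / (l * s)))) := by
  have hρ : m / A ≠ 0 := ENNReal.div_ne_zero.2 ⟨hm, hA'⟩
  have hρ' : m / A ≠ ⊤ := ENNReal.div_ne_top hm' hA
  have hr' : (m / A) ^ l⁻¹ ≠ ⊤ := ENNReal.rpow_ne_top_of_ne_zero hρ hρ'
  have hr : 0 < ((m / A) ^ l⁻¹).toReal :=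
    ENNReal.toReal_pos (ENNReal.rpow_pos hρ.bot_lt hρ').ne' hr'
  have hfactor : ENNReal.ofReal ((m / A) ^ l⁻¹).toReal ^ (d / s) * m =
      m ^ (1 + d / (l * s)) * A ^ (-(d / (l * s))) := by
    rw [ENNReal.ofReal_toReal hr', ← ENNReal.rpow_mul, show l⁻¹ * (d / s) = d / (l * s) by
      field_simp, div_eq_mul_inv, mul_rpow_of_ne_zero_of_ne_top hm hm', ENNReal.inv_rpow,
      ← ENNReal.rpow_neg, ENNReal.rpow_add _ _ hm hm', ENNReal.rpow_one]
    ring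
  rw [eLpNorm'_eq_rpow_mul_eLpNorm'_comp_add_smul μ x₀ hr]
  simp only [radialWeight_add_smul hl hm' hA hA']
  rw [eLpNorm'_const_mul_of_ne_zero hs hm hm' (measurable_radialWeight l 1 1 0).aemeasurable,
    ← mul_assoc, hfactor, mul_comm]

end RadialWeight

section PowerPotential

/-- The integral operator with kernel `|x - y| ^ l`; for `l = α - n` on `ℝⁿ` this is the
operator `I_α`. -/
noncomputable def powerPotential {X : Type*} [EDist X] [MeasurableSpace X] (μ : Measure X) (l : ℝ)
    (f : X → ℝ≥0∞) (x : X) : ℝ≥0∞ :=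
  ∫⁻ y, f y * edist x y ^ l ∂μ

section PseudoEMetric

variable {X : Type*} [PseudoEMetricSpace X] [MeasurableSpace X] [OpensMeasurableSpace X]
  {μ : Measure X} {l : ℝ} {f : X → ℝ≥0∞}

lemma lintegral_mul_radialWeight (hf : AEMeasurable f μ) (m A : ℝ≥0∞) (x : X) :
    ∫⁻ y, f y * radialWeight l m A x y ∂μ = (∫⁻ y, f y ∂μ) * m + A * powerPotential μ l f x := by
  have hker : AEMeasurable (fun y => f y * edist x y ^ l) μ :=
    hf.mul (measurable_edist_right.pow_const l).aemeasurable
  simp only [radialWeight, mul_add, mul_left_comm _ A]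
  rw [lintegral_add_left' (hf.mul_const m), lintegral_mul_const'' _ hf,
    lintegral_const_mul'' _ hker, powerPotential]

lemma lintegral_mul_edist_rpow_le (hl : 0 ≤ l) (hf : AEMeasurable f μ) (x x₀ : X) :
    (∫⁻ y, f y ∂μ) * edist x₀ x ^ l ≤
      2 ^ l * (powerPotential μ l f x₀ + powerPotential μ l f x) := by
  have hpoint (y : X) :
      f y * edist x₀ x ^ l ≤ 2 ^ l * (f y * edist x₀ y ^ l + f y * edist x y ^ l) :=
    calc f y * edist x₀ x ^ l ≤ f y * (edist x₀ y + edist x y) ^ l := by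
          gcongr; exact edist_triangle_right x₀ x y
      _ ≤ f y * (2 ^ l * (edist x₀ y ^ l + edist x y ^ l)) := by
          gcongr; exact ENNReal.add_rpow_le_two_rpow_mul_rpow_add_rpow _ _ hl
      _ = 2 ^ l * (f y * edist x₀ y ^ l + f y * edist x y ^ l) := by ring
  have hker : AEMeasurable (fun y => f y * edist x₀ y ^ l) μ :=
    hf.mul (measurable_edist_right.pow_const l).aemeasurable
  calc (∫⁻ y, f y ∂μ) * edist x₀ x ^ l = ∫⁻ y, f y * edist x₀ x ^ l ∂μ :=
        (lintegral_mul_const'' _ hf).symm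
    _ ≤ ∫⁻ y, 2 ^ l * (f y * edist x₀ y ^ l + f y * edist x y ^ l) ∂μ := lintegral_mono hpoint
    _ = 2 ^ l * (powerPotential μ l f x₀ + powerPotential μ l f x) := by
        rw [lintegral_const_mul' _ _ (ENNReal.rpow_ne_top_of_nonneg hl ENNReal.ofNat_ne_top),
          lintegral_add_left' hker, powerPotential, powerPotential]

lemma radialWeight_le_powerPotential (hl : 0 ≤ l) (hf : AEMeasurable f μ) {x₀ : X}
    (hx₀ : ∀ x, powerPotential μ l f x₀ ≤ 2 * powerPotential μ l f x) (x : X) :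
    radialWeight l (powerPotential μ l f x₀) (∫⁻ y, f y ∂μ) x₀ x ≤
      (2 + 2 ^ l * 3) * powerPotential μ l f x :=
  calc radialWeight l (powerPotential μ l f x₀) (∫⁻ y, f y ∂μ) x₀ x
      ≤ 2 * powerPotential μ l f x +
          2 ^ l * (2 * powerPotential μ l f x + powerPotential μ l f x) :=
        add_le_add (hx₀ x) <| (lintegral_mul_edist_rpow_le hl hf x x₀).trans <| by
          gcongr; exact hx₀ x
    _ = (2 + 2 ^ l * 3) * powerPotential μ l f x := by ring

lemma eLpNorm'_radialWeight_le_powerPotential (hl : 0 ≤ l) {q : ℝ} (hq : q < 0)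
    (hf : AEMeasurable f μ) {x₀ : X}
    (hx₀ : ∀ x, powerPotential μ l f x₀ ≤ 2 * powerPotential μ l f x) :
    eLpNorm' (radialWeight l (powerPotential μ l f x₀) (∫⁻ y, f y ∂μ) x₀) q μ ≤
      (2 + 2 ^ l * 3) * eLpNorm' (powerPotential μ l f) q μ := by
  set w := radialWeight l (powerPotential μ l f x₀) (∫⁻ y, f y ∂μ) x₀
  set c : ℝ≥0∞ := 2 + 2 ^ l * 3
  have hc : c ≠ 0 := by simp [c]
  have hc' : c ≠ ⊤ := by
    simp [c, ENNReal.mul_eq_top, ENNReal.rpow_ne_top_of_nonneg hl ENNReal.ofNat_ne_top]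
  rw [← ENNReal.inv_mul_le_iff hc hc', ← eLpNorm'_const_mul_of_ne_zero hq.ne
    (ENNReal.inv_ne_zero.2 hc') (ENNReal.inv_ne_top.2 hc)
    (measurable_radialWeight _ _ _ x₀).aemeasurable]
  refine eLpNorm'_mono_of_nonpos hq.le fun x => ?_
  exact (ENNReal.inv_mul_le_iff hc hc').2 (radialWeight_le_powerPotential hl hf hx₀ x)

end PseudoEMetric

section NullSingletonClass

variable {X : Type*} [MetricSpace X] [MeasurableSpace X] [OpensMeasurableSpace X]
  {μ : Measure X} [NullSingletonClass μ] {l : ℝ} {f : X → ℝ≥0∞}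

lemma powerPotential_ne_zero (hf : AEMeasurable f μ) (hf0 : ∫⁻ y, f y ∂μ ≠ 0) (x : X) :
    powerPotential μ l f x ≠ 0 := by
  have hker : AEMeasurable (fun y => f y * edist x y ^ l) μ :=
    hf.mul (measurable_edist_right.pow_const l).aemeasurable
  contrapose hf0
  rw [powerPotential, lintegral_eq_zero_iff' hker] at hf0
  rw [lintegral_eq_zero_iff' hf]
  filter_upwards [hf0, Measure.ae_ne μ x] with y hy hyx
  refine (mul_eq_zero.1 hy).resolve_right ?_
  exact (ENNReal.rpow_pos (edist_pos.2 hyx.symm) (edist_ne_top x y)).ne'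

lemma powerPotential_ae_eq_top (hl : 0 ≤ l) (hf : AEMeasurable f μ) (hftop : ∫⁻ y, f y ∂μ = ⊤) :
    ∀ᵐ x ∂μ, powerPotential μ l f x = ⊤ := by
  by_cases hall : ∀ x, powerPotential μ l f x = ⊤
  · exact .of_forall hall
  obtain ⟨x₀, hx₀⟩ := not_forall.1 hall
  filter_upwards [Measure.ae_ne μ x₀] with x hx
  have hdist : edist x₀ x ^ l ≠ 0 :=
    (ENNReal.rpow_pos (edist_pos.2 hx.symm) (edist_ne_top x₀ x)).ne'
  have htop := lintegral_mul_edist_rpow_le hl hf x x₀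
  rw [hftop, ENNReal.top_mul hdist, top_le_iff] at htop
  by_contra hx
  exact ENNReal.mul_ne_top (ENNReal.rpow_ne_top_of_nonneg hl ENNReal.ofNat_ne_top)
    (ENNReal.add_ne_top.2 ⟨hx₀, hx⟩) htop

end NullSingletonClass

variable {E : Type*} [NormedAddCommGroup E] [NormedSpace ℝ E] [FiniteDimensional ℝ E]
  [MeasurableSpace E] [BorelSpace E] {μ : Measure E} [μ.IsAddHaarMeasure] {l p q s : ℝ}
  {f : E → ℝ≥0∞}

local notation "d" => (Module.finrank ℝ E : ℝ)

theorem eLpNorm'_mul_le_powerPotential_rpow (hl : 0 < l) (hp0 : 0 < p) (hp1 : p < 1)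
    (hps : 1 / p + 1 / s = 1) (hf : AEMeasurable f μ) (hf0 : ∫⁻ y, f y ∂μ ≠ 0)
    (hftop : ∫⁻ y, f y ∂μ ≠ ⊤) {x : E} (hx0 : powerPotential μ l f x ≠ 0)
    (hxtop : powerPotential μ l f x ≠ ⊤) :
    eLpNorm' (radialWeight l 1 1 (0 : E)) s μ * eLpNorm' f p μ ≤
      2 * (powerPotential μ l f x ^ (-(d / (l * s))) * (∫⁻ y, f y ∂μ) ^ (1 + d / (l * s))) := by
  set A := ∫⁻ y, f y ∂μ
  set m := powerPotential μ l f x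
  set θ := d / (l * s)
  have hs : s ≠ 0 := conjugateExponent_ne_zero hp0.ne' hp1.ne hps
  set P := m ^ (1 + θ) * A ^ (-θ)
  have hP0 : P ≠ 0 := mul_ne_zero (ENNReal.rpow_pos hx0.bot_lt hxtop).ne'
    (ENNReal.rpow_pos hf0.bot_lt hftop).ne'
  have hPtop : P ≠ ⊤ := ENNReal.mul_ne_top (ENNReal.rpow_ne_top_of_ne_zero hx0 hxtop)
    (ENNReal.rpow_ne_top_of_ne_zero hf0 hftop)
  have hsplit : 2 * (A * m) = 2 * (m ^ (-θ) * A ^ (1 + θ)) * P := by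
    have hm : m ^ (-θ) * m ^ (1 + θ) = m := by
      rw [← ENNReal.rpow_add _ _ hx0 hxtop, neg_add_cancel_comm_assoc, ENNReal.rpow_one]
    have hA : A ^ (1 + θ) * A ^ (-θ) = A := by
      rw [← ENNReal.rpow_add _ _ hf0 hftop, add_neg_cancel_right, ENNReal.rpow_one]
    calc 2 * (A * m) = 2 * (A ^ (1 + θ) * A ^ (-θ) * (m ^ (-θ) * m ^ (1 + θ))) := by rw [hm, hA]
      _ = 2 * (m ^ (-θ) * A ^ (1 + θ)) * P := by ring
  refine (ENNReal.mul_le_mul_iff_left hP0 hPtop).1 ?_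
  calc eLpNorm' (radialWeight l 1 1 (0 : E)) s μ * eLpNorm' f p μ * P
      = eLpNorm' f p μ * eLpNorm' (radialWeight l m A x) s μ := by
        rw [eLpNorm'_radialWeight μ hl hs hx0 hxtop hf0 hftop]; ring
    _ ≤ ∫⁻ y, f y * radialWeight l m A x y ∂μ :=
        eLpNorm'_mul_eLpNorm'_le_lintegral_mul hp0 hp1 hps hf
          (measurable_radialWeight l m A x).aemeasurable
          (.of_forall (radialWeight_ne_zero hx0 x))
          (.of_forall (radialWeight_ne_top hl.le hxtop hftop x))
    _ = 2 * (A * m) := by rw [lintegral_mul_radialWeight hf]; ring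
    _ = 2 * (m ^ (-θ) * A ^ (1 + θ)) * P := hsplit

lemma iInf_powerPotential_ne_zero [Nontrivial E] (hl : 0 < l) (hf : AEMeasurable f μ)
    (hf0 : ∫⁻ y, f y ∂μ ≠ 0) (hftop : ∫⁻ y, f y ∂μ ≠ ⊤) : ⨅ x, powerPotential μ l f x ≠ 0 := by
  have hd : 0 < d := Nat.cast_pos.2 Module.finrank_pos
  set A := ∫⁻ y, f y ∂μ
  -- Any conjugate exponents with `l * s < -d` would do.
  let p : ℝ := (d + 1) / (d + 1 + l)
  let s : ℝ := -(d + 1) / l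
  have hp0 : 0 < p := by positivity
  have hp1 : p < 1 := (div_lt_one (by positivity)).2 (by linarith)
  have hls : l * s = -(d + 1) := mul_div_cancel₀ _ hl.ne'
  have hps : 1 / p + 1 / s = 1 := by
    simp only [p, s]
    field_simp
    ring
  let θ : ℝ := -(d / (l * s))
  have hθ : 0 < θ := by
    simp only [θ, hls, div_neg, neg_neg]
    positivity
  let κ := eLpNorm' (radialWeight l 1 1 (0 : E)) s μ
  have hκ : κ ≠ 0 := eLpNorm'_radialWeight_one_ne_zero μ hl (by linarith)
  have hnorm : eLpNorm' f p μ ≠ 0 := by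
    rwa [Ne, eLpNorm'_eq_zero_iff hp0 hf.aestronglyMeasurable, ← lintegral_eq_zero_iff' hf]
  let B := 2 * A ^ (1 + d / (l * s))
  have hB0 : B ≠ 0 := mul_ne_zero two_ne_zero (ENNReal.rpow_pos hf0.bot_lt hftop).ne'
  have hBtop : B ≠ ⊤ :=
    ENNReal.mul_ne_top ENNReal.ofNat_ne_top (ENNReal.rpow_ne_top_of_ne_zero hf0 hftop)
  have hlower (x : E) : (κ * eLpNorm' f p μ / B) ^ θ⁻¹ ≤ powerPotential μ l f x := by
    by_cases hxtop : powerPotential μ l f x = ⊤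
    · exact hxtop ▸ le_top
    rw [ENNReal.rpow_inv_le_iff hθ, ENNReal.div_le_iff hB0 hBtop]
    refine (eLpNorm'_mul_le_powerPotential_rpow hl hp0 hp1 hps hf hf0 hftop
      (powerPotential_ne_zero hf hf0 x) hxtop).trans_eq ?_
    rw [mul_left_comm]
  refine ne_bot_of_le_ne_bot ?_ (le_iInf hlower)
  rw [bot_eq_zero, Ne, ENNReal.rpow_eq_zero_iff_of_pos (inv_pos.2 hθ)]
  exact ENNReal.div_ne_zero.2 ⟨mul_ne_zero hκ hnorm, hBtop⟩

theorem mul_eLpNorm'_le_two_mul_eLpNorm'_radialWeight [Nontrivial E] (hl : 0 < l) (hp0 : 0 < p)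
    (hp1 : p < 1) (hq : q ≠ 0) (hps : 1 / p + 1 / s = 1) (hqs : 1 / q + 1 / s = -(l / d))
    (hf : AEMeasurable f μ) (hf0 : ∫⁻ y, f y ∂μ ≠ 0) (hftop : ∫⁻ y, f y ∂μ ≠ ⊤) {x : E}
    (hx0 : powerPotential μ l f x ≠ 0) (hxtop : powerPotential μ l f x ≠ ⊤) :
    eLpNorm' (radialWeight l 1 1 (0 : E)) q μ * eLpNorm' (radialWeight l 1 1 (0 : E)) s μ *
        eLpNorm' f p μ ≤
      2 * eLpNorm' (radialWeight l (powerPotential μ l f x) (∫⁻ y, f y ∂μ) x) q μ := by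
  have hd : d ≠ 0 := (Nat.cast_pos.2 Module.finrank_pos).ne'
  have hq' : d / (l * q) = -(1 + d / (l * s)) := by
    have h : d / l * (1 / q + 1 / s) = -1 := by rw [hqs]; field_simp
    rw [mul_add, div_mul_div_comm, div_mul_div_comm, mul_one] at h
    linarith
  set A := ∫⁻ y, f y ∂μ
  set m := powerPotential μ l f x
  set κq := eLpNorm' (radialWeight l 1 1 (0 : E)) q μ
  set κs := eLpNorm' (radialWeight l 1 1 (0 : E)) s μ
  calc κq * κs * eLpNorm' f p μ = κq * (κs * eLpNorm' f p μ) := mul_assoc _ _ _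
    _ ≤ κq * (2 * (m ^ (-(d / (l * s))) * A ^ (1 + d / (l * s)))) :=
        mul_le_mul_right (eLpNorm'_mul_le_powerPotential_rpow hl hp0 hp1 hps hf hf0 hftop hx0
          hxtop) κq
    _ = 2 * eLpNorm' (radialWeight l m A x) q μ := by
        rw [eLpNorm'_radialWeight μ hl hq hx0 hxtop hf0 hftop, hq', neg_neg, neg_add,
          add_neg_cancel_left, mul_left_comm]

theorem mul_eLpNorm'_le_mul_eLpNorm'_powerPotential [Nontrivial E] (hl : 0 < l) (hp0 : 0 < p)
    (hp1 : p < 1) (hq : q < 0) (hps : 1 / p + 1 / s = 1) (hqs : 1 / q + 1 / s = -(l / d))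
    (hf : AEMeasurable f μ) :
    eLpNorm' (radialWeight l 1 1 (0 : E)) q μ * eLpNorm' (radialWeight l 1 1 (0 : E)) s μ *
        eLpNorm' f p μ ≤
      2 * (2 + 2 ^ l * 3) * eLpNorm' (powerPotential μ l f) q μ := by
  rcases eq_or_ne (eLpNorm' (powerPotential μ l f) q μ) ⊤ with hI | hI
  · rw [hI, ENNReal.mul_top (by simp)]
    exact le_top
  by_cases hf0 : ∫⁻ y, f y ∂μ = 0
  · rw [lintegral_eq_zero_iff' hf] at hf0
    simp [eLpNorm'_eq_zero_of_ae_zero hp0 hf0]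
  have hftop : ∫⁻ y, f y ∂μ ≠ ⊤ := fun h =>
    hI (eLpNorm'_eq_top_of_ae_eq_top hq (powerPotential_ae_eq_top hl.le hf h))
  obtain ⟨x₀, hx₀⟩ := exists_forall_le_two_mul (iInf_powerPotential_ne_zero hl hf hf0 hftop)
  have hxtop : powerPotential μ l f x₀ ≠ ⊤ := fun h =>
    hI <| eLpNorm'_eq_top_of_ae_eq_top hq <| .of_forall fun x => by
      simpa [h, ENNReal.mul_eq_top] using hx₀ x
  calc _ ≤ 2 * eLpNorm' (radialWeight l (powerPotential μ l f x₀) (∫⁻ y, f y ∂μ) x₀) q μ :=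
        mul_eLpNorm'_le_two_mul_eLpNorm'_radialWeight hl hp0 hp1 hq.ne hps hqs hf hf0 hftop
          (powerPotential_ne_zero hf hf0 x₀) hxtop
    _ ≤ 2 * ((2 + 2 ^ l * 3) * eLpNorm' (powerPotential μ l f) q μ) :=
        mul_le_mul_right (eLpNorm'_radialWeight_le_powerPotential hl.le hq hf hx₀) 2
    _ = 2 * (2 + 2 ^ l * 3) * eLpNorm' (powerPotential μ l f) q μ := (mul_assoc _ _ _).symm

end PowerPotential

section ReversedHLS

variable {p q s l α δ : ℝ}

lemma reversed_HLS_exponent_neg (hδ : 0 < δ) (hα : δ < α) (hp : δ / α < p)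
    (hq : 1 / q = 1 / p - α / δ) : q < 0 := by
  have hp' : 1 / p < α / δ := by
    rw [← one_div_div δ α]
    exact one_div_lt_one_div_of_lt (div_pos hδ (hδ.trans hα)) hp
  exact one_div_neg.1 (hq ▸ sub_neg.2 hp')

lemma mul_lt_neg_of_one_div_add_one_div (hδ : 0 < δ) (hq : q < 0) (hs : s < 0)
    (hqs : 1 / q + 1 / s = -(l / δ)) : l * q < -δ := by
  have h : -(l / δ) < 1 / q := by linarith [one_div_neg.2 hs]
  rw [lt_div_iff_of_neg hq, neg_mul, div_mul_eq_mul_div, lt_neg, div_lt_iff₀ hδ] at h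
  linarith

theorem reversed_HLS_operator_form_general {E : Type*} [NormedAddCommGroup E] [NormedSpace ℝ E]
    [FiniteDimensional ℝ E] [Nontrivial E] [MeasurableSpace E] [BorelSpace E] (μ : Measure E)
    [μ.IsAddHaarMeasure] (hα : Module.finrank ℝ E < α) (hp0 : Module.finrank ℝ E / α < p)
    (hp1 : p < 1) (hq : 1 / q = 1 / p - α / Module.finrank ℝ E) :
    q < 0 ∧ ∃ C : ℝ, 0 < C ∧ ∀ f : E → ℝ≥0∞, AEMeasurable f μ →
      ENNReal.ofReal C * eLpNorm' f p μ ≤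
        eLpNorm' (powerPotential μ (α - Module.finrank ℝ E) f) q μ := by
  set d : ℝ := (Module.finrank ℝ E : ℝ)
  have hd : 0 < d := Nat.cast_pos.2 Module.finrank_pos
  have hl : 0 < α - d := sub_pos.2 hα
  have hp : 0 < p := (div_pos hd (hd.trans hα)).trans hp0
  have hqneg : q < 0 := reversed_HLS_exponent_neg hd hα hp0 hq
  obtain ⟨s, hps⟩ : ∃ s : ℝ, 1 / p + 1 / s = 1 := ⟨(1 - 1 / p)⁻¹, by simp⟩
  have hs : s < 0 := one_div_neg.1 (by linarith [one_lt_one_div hp hp1])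
  have hqs : 1 / q + 1 / s = -((α - d) / d) := by
    rw [hq, sub_div, div_self hd.ne']
    linarith
  have hlq := mul_lt_neg_of_one_div_add_one_div hd hqneg hs hqs
  have hls := mul_lt_neg_of_one_div_add_one_div hd hs hqneg ((add_comm _ _).trans hqs)
  set κ := eLpNorm' (radialWeight (α - d) 1 1 (0 : E)) q μ *
    eLpNorm' (radialWeight (α - d) 1 1 (0 : E)) s μ
  have hκ : κ ≠ 0 := mul_ne_zero (eLpNorm'_radialWeight_one_ne_zero μ hl hlq)
    (eLpNorm'_radialWeight_one_ne_zero μ hl hls)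
  have hκ' : κ ≠ ⊤ := ENNReal.mul_ne_top (eLpNorm'_radialWeight_one_ne_top μ hl hlq)
    (eLpNorm'_radialWeight_one_ne_top μ hl hls)
  set c : ℝ≥0∞ := 2 * (2 + 2 ^ (α - d) * 3)
  have hc : c ≠ 0 := by simp [c]
  have hc' : c ≠ ⊤ := by simp [c, ENNReal.mul_eq_top]
  refine ⟨hqneg, (κ / c).toReal, ENNReal.toReal_pos (ENNReal.div_ne_zero.2 ⟨hκ, hc'⟩)
    (ENNReal.div_ne_top hκ' hc), fun f hf => ?_⟩
  rw [ENNReal.ofReal_toReal (ENNReal.div_ne_top hκ' hc), ← ENNReal.mul_div_right_comm]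
  exact ENNReal.div_le_of_le_mul'
    (mul_eLpNorm'_le_mul_eLpNorm'_powerPotential hl hp hp1 hqneg hps hqs hf)

lemma rieszNeg_eq_powerPotential {n : ℕ} (hα : (n : ℝ) ≤ α) {f : EuclideanSpace ℝ (Fin n) → ℝ}
    (hf : ∀ x, 0 ≤ f x) :
    rieszNeg n α f = powerPotential volume (α - n) fun y => ENNReal.ofReal (f y) := by
  funext x
  refine lintegral_congr fun y => ?_
  rw [ENNReal.ofReal_mul (hf y), edist_dist,
    ENNReal.ofReal_rpow_of_nonneg dist_nonneg (sub_nonneg.2 hα)]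

lemma eLpNorm'_ofReal {X : Type*} [MeasurableSpace X] {μ : Measure X} (hp : 0 ≤ p) {f : X → ℝ}
    (hf : ∀ x, 0 ≤ f x) (hfp : Integrable (fun x => |f x| ^ p) μ) :
    eLpNorm' (fun x => ENNReal.ofReal (f x)) p μ =
      ENNReal.ofReal ((∫ x, |f x| ^ p ∂μ) ^ (1 / p)) := by
  have hpow (x : X) : ‖ENNReal.ofReal (f x)‖ₑ ^ p = ENNReal.ofReal (|f x| ^ p) := by
    rw [enorm_eq_self, ENNReal.ofReal_rpow_of_nonneg (hf x) hp, abs_of_nonneg (hf x)]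
  have hnonneg : ∀ x, 0 ≤ |f x| ^ p := fun x => by positivity
  simp only [eLpNorm', hpow]
  rw [← ofReal_integral_eq_lintegral_ofReal hfp (.of_forall hnonneg),
    ENNReal.ofReal_rpow_of_nonneg (integral_nonneg hnonneg) (one_div_nonneg.2 hp)]

end ReversedHLS

/-- **Reversed HLS inequality, operator form with rough constant** (Proposition 2.2):
for `1 ≤ n < α`, `n/α < p < 1` and `1/q = 1/p - α/n` (so `q < 0`), there is a constant
`C(n, α, p) > 0` such that `‖I_α f‖_{L^q(ℝⁿ)} ≥ C ‖f‖_{L^p(ℝⁿ)}` for all nonnegative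
`f ∈ L^p(ℝⁿ)`. -/
theorem reversed_HLS_operator_form (n : ℕ) (hn : 1 ≤ n) (α p q : ℝ)
    (hα : (n : ℝ) < α) (hp0 : (n : ℝ) / α < p) (hp1 : p < 1)
    (hq : 1 / q = 1 / p - α / n) :
    (q < 0) ∧ ∃ C : ℝ, 0 < C ∧ ∀ f : EuclideanSpace ℝ (Fin n) → ℝ,
      Measurable f → (∀ x, 0 ≤ f x) → Integrable (fun x => |f x| ^ p) →
        ENNReal.ofReal (C * (∫ x, |f x| ^ p) ^ (1 / p)) ≤
          (∫⁻ x, (rieszNeg n α f x) ^ q) ^ (1 / q) := by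
  have : Nonempty (Fin n) := ⟨⟨0, hn⟩⟩
  have hp : 0 ≤ p := (div_nonneg n.cast_nonneg (n.cast_nonneg.trans hα.le)).trans hp0.le
  obtain ⟨hqneg, C, hC, hbound⟩ := reversed_HLS_operator_form_general (p := p) (q := q) (α := α)
    (volume : Measure (EuclideanSpace ℝ (Fin n))) (by simpa using hα)
    (by simpa using hp0) hp1 (by simpa using hq)
  refine ⟨hqneg, C, hC, fun f hf hf0 hfp => ?_⟩
  have hfbound := hbound (fun x => ENNReal.ofReal (f x)) hf.ennreal_ofReal.aemeasurable
  rw [eLpNorm'_ofReal hp hf0 hfp, ← ENNReal.ofReal_mul hC.le, finrank_euclideanSpace_fin,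
    ← rieszNeg_eq_powerPotential hα.le hf0] at hfbound
  exact hfbound
end

section
/- Let 1 ≤ n < α, p = 2n/(n+α), q = 2n/(n−α). Then for every nonnegative F ∈ L^p(𝕊ⁿ), one has ‖Ĩ_α F‖_{L^q(𝕊ⁿ)} ≥ N*(n, α)·‖F‖_{L^p(𝕊ⁿ)}, where N*(n, α) = π^{(n−α)/2} · Γ(α/2)/Γ((n+α)/2) · (Γ(n/2)/Γ(n))^{−α/n}. -/
open MeasureTheory ENNReal Metric

/-- The standard surface measure on the unit sphere `𝕊ⁿ ⊆ ℝ^(n+1)`. -/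
noncomputable def sphereMeasure (n : ℕ) :
    Measure (sphere (0 : EuclideanSpace ℝ (Fin (n + 1))) 1) :=
  (volume : Measure (EuclideanSpace ℝ (Fin (n + 1)))).toSphere

/-- The singular integral operator `Ĩ_α F(ξ) = ∫_{𝕊ⁿ} F(η) |ξ-η|^(α-n) dη` on the sphere,
where `|ξ-η|` is the chordal distance in `ℝ^(n+1)`, valued in `ℝ≥0∞`. -/
noncomputable def sphereRiesz (n : ℕ) (α : ℝ)
    (F : sphere (0 : EuclideanSpace ℝ (Fin (n + 1))) 1 → ℝ)
    (ξ : sphere (0 : EuclideanSpace ℝ (Fin (n + 1))) 1) : ℝ≥0∞ :=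
  ∫⁻ η, ENNReal.ofReal (F η *
    dist (ξ : EuclideanSpace ℝ (Fin (n + 1))) (η : EuclideanSpace ℝ (Fin (n + 1))) ^ (α - n))
    ∂(sphereMeasure n)

/-!
Put `s = α - n` and replace the kernel `|ξ - η| ^ s` by `|ξ - η| ^ s + ε`. This makes it bounded
below, so that the duals of its potentials are uniformly pinched and equicontinuous, and
Arzelà–Ascoli yields a pair `(F, G)` minimizing `∬ F(ξ) K(ξ, η) G(η) / (‖F‖_p ‖G‖_p)`.

The norms and the part `ε = 0` of the energy are invariant under the conformal group, so `∫ F * ∫ G`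
is minimal along the orbit of `(F, G)` under boosts in any direction `e`. Its derivative vanishes:
`∫ F ⟨e, ·⟩ * ∫ G + ∫ F * ∫ G ⟨e, ·⟩ = 0`. On the other hand, polarizing `F` and `G` into the same
half-space bounded by `e⊥` does not increase the energy, because the kernel is larger between points
on different sides; minimality gives, for the reflection `σ` in `e⊥`, that `(F - F ∘ σ)(ξ) ⟨e, ξ⟩`
and `(G - G ∘ σ)(η) ⟨e, η⟩` have a nonnegative product for all `ξ` and `η`. The two facts together
force `F` or `G`, and then by the Euler–Lagrange equation `F`, to be invariant under `σ`. As `e` is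
arbitrary, `F` is constant, and so the best constant is the one attained by constants. It remains to
let `ε → 0`, to pass from the bilinear form to the `L^q` norm by the equality case of the reverse
Hölder inequality, and to approximate `F` by pinched functions.
-/

namespace ReversedHLS

section Pinched

/-- Measurable functions with values between two positive constants: the class on which all the
integrals of the development, with exponents of either sign, converge. -/
structure IsPinched {X : Type*} [MeasurableSpace X] (F : X → ℝ) : Prop where
  measurable : Measurable F
  exists_bounds : ∃ a > 0, ∃ b > 0, ∀ x, F x ∈ Set.Icc a b

namespace IsPinched

variable {X : Type*} [MeasurableSpace X] {F G : X → ℝ}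

theorem pos (hF : IsPinched F) (x : X) : 0 < F x := by
  obtain ⟨-, a, ha, b, -, hab⟩ := hF
  exact ha.trans_le (hab x).1

protected theorem const {c : ℝ} (hc : 0 < c) : IsPinched fun _ : X => c :=
  ⟨measurable_const, c, hc, c, hc, fun _ => ⟨le_rfl, le_rfl⟩⟩

protected theorem mul (hF : IsPinched F) (hG : IsPinched G) :
    IsPinched fun x => F x * G x := by
  obtain ⟨hFm, a, ha, b, hb, hab⟩ := hF
  obtain ⟨hGm, c, hc, d, hd, hcd⟩ := hG
  refine ⟨hFm.mul hGm, a * c, mul_pos ha hc, b * d, mul_pos hb hd, fun x => ⟨?_, ?_⟩⟩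
  · exact mul_le_mul (hab x).1 (hcd x).1 hc.le (ha.le.trans (hab x).1)
  · exact mul_le_mul (hab x).2 (hcd x).2 (hc.le.trans (hcd x).1) hb.le

protected theorem rpow (hF : IsPinched F) (r : ℝ) : IsPinched fun x => F x ^ r := by
  obtain ⟨hFm, a, ha, b, hb, hab⟩ := hF
  have har := Real.rpow_pos_of_pos ha r
  have hbr := Real.rpow_pos_of_pos hb r
  rcases le_total 0 r with hr | hr
  · exact ⟨hFm.pow_const r, a ^ r, har, b ^ r, hbr, fun x =>
      ⟨Real.rpow_le_rpow ha.le (hab x).1 hr,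
        Real.rpow_le_rpow (ha.le.trans (hab x).1) (hab x).2 hr⟩⟩
  · exact ⟨hFm.pow_const r, b ^ r, hbr, a ^ r, har, fun x =>
      ⟨Real.rpow_le_rpow_of_nonpos (ha.trans_le (hab x).1) (hab x).2 hr,
        Real.rpow_le_rpow_of_nonpos ha (hab x).1 hr⟩⟩

theorem memLp (hF : IsPinched F) (μ : Measure X) [IsFiniteMeasure μ] (p : ℝ≥0∞) :
    MemLp F p μ := by
  obtain ⟨hFm, a, ha, b, -, hab⟩ := hF
  refine .of_bound hFm.aestronglyMeasurable b (ae_of_all _ fun x => ?_)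
  rw [Real.norm_of_nonneg (ha.le.trans (hab x).1)]
  exact (hab x).2

theorem integrable (hF : IsPinched F) (μ : Measure X) [IsFiniteMeasure μ] : Integrable F μ :=
  memLp_one_iff_integrable.1 (hF.memLp μ 1)

theorem integral_pos (hF : IsPinched F) (μ : Measure X) [IsFiniteMeasure μ] [NeZero μ] :
    0 < ∫ x, F x ∂μ := by
  rw [integral_pos_iff_support_of_nonneg (fun x => (hF.pos x).le) (hF.integrable μ),
    Function.support_eq_univ fun x => (hF.pos x).ne']
  exact (NeZero.ne (μ Set.univ)).pos

theorem of_continuous {X : Type*} [TopologicalSpace X] [CompactSpace X] [MeasurableSpace X]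
    [BorelSpace X] {F : X → ℝ} (hF : Continuous F) (hpos : ∀ x, 0 < F x) : IsPinched F := by
  cases isEmpty_or_nonempty X
  · exact ⟨hF.measurable, 1, one_pos, 1, one_pos, isEmptyElim⟩
  · obtain ⟨x, -, hx⟩ := isCompact_univ.exists_isMinOn Set.univ_nonempty hF.continuousOn
    obtain ⟨y, -, hy⟩ := isCompact_univ.exists_isMaxOn Set.univ_nonempty hF.continuousOn
    exact ⟨hF.measurable, F x, hpos x, F y, hpos y, fun z => ⟨hx trivial, hy trivial⟩⟩

end IsPinched

end Pinched

section ReverseHolder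

variable {X : Type*} [MeasurableSpace X] {μ : Measure X} {F G : X → ℝ} {p : ℝ}

/-- The expression `‖F‖_{L^r} = (∫ F^r)^{1/r}` for a positive function `F` and any exponent
`r ≠ 0`, possibly negative; it is a norm only for `r ≥ 1`. -/
noncomputable def rpowNorm (μ : Measure X) (r : ℝ) (F : X → ℝ) : ℝ :=
  (∫ x, F x ^ r ∂μ) ^ (1 / r)

/-- The function that turns the reverse Hölder inequality for `∫ F * G`, with `F ∈ L^p` and
`0 < p < 1`, into an equality. -/
noncomputable def holderDual (p : ℝ) (G : X → ℝ) (x : X) : ℝ :=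
  G x ^ (1 / (p - 1))

theorem IsPinched.holderDual (hG : IsPinched G) (p : ℝ) : IsPinched (holderDual p G) :=
  hG.rpow _

theorem rpowNorm_pos [IsFiniteMeasure μ] [NeZero μ] (hF : IsPinched F) (r : ℝ) :
    0 < rpowNorm μ r F :=
  Real.rpow_pos_of_pos ((hF.rpow r).integral_pos μ) _

theorem rpowNorm_const_mul {c r : ℝ} (hc : 0 ≤ c) (hr : r ≠ 0) (hF : ∀ x, 0 ≤ F x) :
    rpowNorm μ r (fun x => c * F x) = c * rpowNorm μ r F := by
  simp only [rpowNorm, fun x => Real.mul_rpow hc (hF x) (z := r), integral_const_mul]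
  rw [Real.mul_rpow (by positivity) (integral_nonneg fun x => Real.rpow_nonneg (hF x) r),
    ← Real.rpow_mul hc, mul_one_div_cancel hr, Real.rpow_one]

theorem rpowNorm_const {c r : ℝ} (hc : 0 ≤ c) (hr : r ≠ 0) :
    rpowNorm μ r (fun _ : X => c) = c * μ.real Set.univ ^ (1 / r) := by
  simpa [rpowNorm] using rpowNorm_const_mul (μ := μ) (F := fun _ => 1) hc hr fun _ => zero_le_one

theorem conjExponent_ne_zero (hp : p ∈ Set.Ioo 0 1) : p.conjExponent ≠ 0 :=
  div_ne_zero hp.1.ne' (by linarith [hp.2])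

theorem one_div_conjExponent (p : ℝ) : 1 / p.conjExponent = -((1 - p) / p) := by
  rw [Real.conjExponent, one_div_div, ← neg_div, neg_sub]

theorem integral_rpow_le_integral_mul_rpow [IsFiniteMeasure μ] (hp : p ∈ Set.Ioo 0 1)
    (hF : IsPinched F) (hG : IsPinched G) :
    ∫ x, F x ^ p ∂μ ≤
      (∫ x, F x * G x ∂μ) ^ p * (∫ x, G x ^ p.conjExponent ∂μ) ^ (1 - p) := by
  obtain ⟨hp0, hp1⟩ := hp
  have hconj : (1 / p).HolderConjugate (1 / (1 - p)) := by
    rw [Real.holderConjugate_iff]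
    exact ⟨by rwa [lt_one_div one_pos hp0, one_div_one], by simp⟩
  have hFG := (hF.mul hG).rpow p
  have hG' := hG.rpow (-p)
  have split_rpow (x : X) : (F x * G x) ^ p * G x ^ (-p) = F x ^ p := by
    rw [Real.mul_rpow (hF.pos x).le (hG.pos x).le, mul_assoc, ← Real.rpow_add (hG.pos x)]
    simp
  have cancel_left (x : X) : ((F x * G x) ^ p) ^ (1 / p) = F x * G x := by
    rw [← Real.rpow_mul ((hF.mul hG).pos x).le, mul_one_div_cancel hp0.ne', Real.rpow_one]
  have cancel_right (x : X) : (G x ^ (-p)) ^ (1 / (1 - p)) = G x ^ p.conjExponent := by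
    rw [← Real.rpow_mul (hG.pos x).le, Real.conjExponent, ← neg_sub 1 p, div_neg, mul_one_div,
      neg_div]
  simpa only [split_rpow, cancel_left, cancel_right, one_div_one_div] using
    integral_mul_le_Lp_mul_Lq_of_nonneg hconj (ae_of_all μ fun x => (hFG.pos x).le)
      (ae_of_all _ fun x => (hG'.pos x).le) (hFG.memLp μ _) (hG'.memLp μ _)

theorem rpowNorm_mul_rpowNorm_le_integral_mul [IsFiniteMeasure μ] [NeZero μ]
    (hp : p ∈ Set.Ioo 0 1) (hF : IsPinched F) (hG : IsPinched G) :
    rpowNorm μ p F * rpowNorm μ p.conjExponent G ≤ ∫ x, F x * G x ∂μ := by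
  have hFG := (hF.mul hG).integral_pos μ
  have hGq := (hG.rpow p.conjExponent).integral_pos μ
  have hFp := (hF.rpow p).integral_pos μ
  unfold rpowNorm
  rw [one_div_conjExponent, Real.rpow_neg hGq.le, ← div_eq_mul_inv,
    div_le_iff₀ (Real.rpow_pos_of_pos hGq _)]
  calc (∫ x, F x ^ p ∂μ) ^ (1 / p)
      ≤ ((∫ x, F x * G x ∂μ) ^ p * (∫ x, G x ^ p.conjExponent ∂μ) ^ (1 - p)) ^ (1 / p) :=
        Real.rpow_le_rpow hFp.le (integral_rpow_le_integral_mul_rpow hp hF hG)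
          (one_div_nonneg.2 hp.1.le)
    _ = (∫ x, F x * G x ∂μ) * (∫ x, G x ^ p.conjExponent ∂μ) ^ ((1 - p) / p) := by
        rw [Real.mul_rpow (by positivity) (by positivity), ← Real.rpow_mul hFG.le,
          ← Real.rpow_mul hGq.le, mul_one_div_cancel hp.1.ne', Real.rpow_one, mul_one_div]

theorem integral_holderDual_mul [IsFiniteMeasure μ] [NeZero μ] (hp : p ∈ Set.Ioo 0 1)
    (hG : IsPinched G) :
    ∫ x, holderDual p G x * G x ∂μ =
      rpowNorm μ p (holderDual p G) * rpowNorm μ p.conjExponent G := by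
  have hp1 : p - 1 ≠ 0 := by linarith [hp.2]
  have hp0 := hp.1.ne'
  have dual_mul (x : X) : holderDual p G x * G x = G x ^ p.conjExponent := by
    rw [holderDual, ← Real.rpow_add_one (hG.pos x).ne', Real.conjExponent, div_add_one hp1,
      add_sub_cancel]
  have dual_rpow (x : X) : holderDual p G x ^ p = G x ^ p.conjExponent := by
    rw [holderDual, ← Real.rpow_mul (hG.pos x).le, Real.conjExponent, one_div_mul_eq_div]
  simp only [rpowNorm, dual_mul, dual_rpow]
  rw [← Real.rpow_add ((hG.rpow _).integral_pos μ), one_div_conjExponent, sub_div,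
    div_self hp0]
  simp

end ReverseHolder

section Energy

variable {X : Type*} [TopologicalSpace X] [MeasurableSpace X] {μ : Measure X} {F G : X → ℝ}
  {K : C(X × X, ℝ)}

/-- The potential `x ↦ ∫ K(x, y) F(y) dμ(y)` of `F` for the kernel `K`. -/
noncomputable def potential (μ : Measure X) (K : C(X × X, ℝ)) (F : X → ℝ) (x : X) : ℝ :=
  ∫ y, K (x, y) * F y ∂μ

/-- The bilinear form `∬ F(x) K(x, y) G(y) dμ(x) dμ(y)` of the kernel `K`. -/
noncomputable def energy (μ : Measure X) (K : C(X × X, ℝ)) (F G : X → ℝ) : ℝ :=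
  ∫ x, F x * potential μ K G x ∂μ

theorem potential_const_mul (c : ℝ) (F : X → ℝ) (x : X) :
    potential μ K (fun y => c * F y) x = c * potential μ K F x := by
  simp only [potential, mul_left_comm _ c, integral_const_mul]

variable [CompactSpace X] [BorelSpace X] [IsFiniteMeasure μ]

theorem IsPinched.integrable_continuous_mul (hF : IsPinched F) (f : C(X, ℝ)) :
    Integrable (fun x => f x * F x) μ :=
  (hF.integrable μ).bdd_mul f.continuous.aestronglyMeasurable
    (ae_of_all _ fun x => f.norm_coe_le_norm x)

theorem IsPinched.integrable_kernel_mul (hF : IsPinched F) (K : C(X × X, ℝ)) (x : X) :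
    Integrable (fun y => K (x, y) * F y) μ :=
  hF.integrable_continuous_mul (K.curry x)

theorem mul_integral_le_potential {c : ℝ} (hK : ∀ z, c ≤ K z) (hF : IsPinched F) (x : X) :
    c * ∫ y, F y ∂μ ≤ potential μ K F x := by
  rw [potential, ← integral_const_mul]
  exact integral_mono ((hF.integrable μ).const_mul _) (hF.integrable_kernel_mul K x)
    fun y => mul_le_mul_of_nonneg_right (hK _) (hF.pos y).le

theorem potential_le_mul_integral {c : ℝ} (hK : ∀ z, K z ≤ c) (hF : IsPinched F) (x : X) :
    potential μ K F x ≤ c * ∫ y, F y ∂μ := by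
  rw [potential, ← integral_const_mul]
  exact integral_mono (hF.integrable_kernel_mul K x) ((hF.integrable μ).const_mul _)
    fun y => mul_le_mul_of_nonneg_right (hK _) (hF.pos y).le

theorem dist_potential_le (hF : IsPinched F) (x x' : X) :
    dist (potential μ K F x) (potential μ K F x') ≤
      dist (K.curry x) (K.curry x') * ∫ y, F y ∂μ := by
  rw [dist_eq_norm, potential, potential, ← integral_const_mul,
    ← integral_sub (hF.integrable_kernel_mul K x) (hF.integrable_kernel_mul K x')]
  refine norm_integral_le_of_norm_le ((hF.integrable μ).const_mul _) (ae_of_all _ fun y => ?_)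
  rw [← sub_mul, norm_mul, Real.norm_of_nonneg (hF.pos y).le]
  exact mul_le_mul_of_nonneg_right
    (ContinuousMap.dist_apply_le_dist (f := K.curry x) (g := K.curry x') y) (hF.pos y).le

theorem continuous_potential (hF : IsPinched F) : Continuous (potential μ K F) := by
  refine continuous_iff_continuousAt.2 fun x => tendsto_iff_dist_tendsto_zero.2 ?_
  refine squeeze_zero (fun _ => dist_nonneg) (fun x' => dist_potential_le hF x' x) ?_
  have h : Continuous fun x' => dist (K.curry x') (K.curry x) * ∫ y, F y ∂μ := by fun_prop
  simpa using h.tendsto x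

theorem potential_add_const (hF : IsPinched F) (c : ℝ) (x : X) :
    potential μ (K + .const _ c) F x = potential μ K F x + c * ∫ y, F y ∂μ := by
  simp only [potential, ContinuousMap.add_apply, ContinuousMap.const_apply, add_mul]
  rw [integral_add (hF.integrable_kernel_mul K x) ((hF.integrable μ).const_mul c),
    integral_const_mul]

theorem energy_add_const (hF : IsPinched F) (hG : IsPinched G) (c : ℝ) :
    energy μ (K + .const _ c) F G =
      energy μ K F G + c * ((∫ x, F x ∂μ) * ∫ x, G x ∂μ) := by
  have hFG : Integrable (fun x => F x * potential μ K G x) μ := by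
    simpa only [mul_comm, ContinuousMap.coe_mk] using
      hF.integrable_continuous_mul ⟨_, continuous_potential hG⟩
  simp only [energy, potential_add_const hG, mul_add]
  rw [integral_add hFG ((hF.integrable μ).mul_const _), integral_mul_const, mul_left_comm]

theorem IsPinched.potential (hF : IsPinched F) (hK : ∀ z, 0 ≤ K z)
    (hpos : ∀ x, 0 < ∫ y, K (x, y) ∂μ) : IsPinched (potential μ K F) := by
  refine .of_continuous (continuous_potential hF) fun x => ?_
  obtain ⟨-, a, ha, b, -, hab⟩ := id hF
  calc 0 < (∫ y, K (x, y) ∂μ) * a := mul_pos (hpos x) ha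
    _ = ∫ y, K (x, y) * a ∂μ := (integral_mul_const a _).symm
    _ ≤ ∫ y, K (x, y) * F y ∂μ :=
        integral_mono ((IsPinched.const ha).integrable_kernel_mul K x)
          (hF.integrable_kernel_mul K x) fun y => mul_le_mul_of_nonneg_left (hab y).1 (hK _)

theorem IsPinched.potential_of_pos [NeZero μ] (hF : IsPinched F) (hK : ∀ z, 0 < K z) :
    IsPinched (ReversedHLS.potential μ K F) :=
  hF.potential (fun z => (hK z).le) fun x =>
    (IsPinched.of_continuous (K.curry x).continuous fun y => hK (x, y)).integral_pos μ

variable [SecondCountableTopology X]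

theorem IsPinched.integrable_mul_mul_kernel (hF : IsPinched F) (hG : IsPinched G)
    (K : C(X × X, ℝ)) : Integrable (fun z : X × X => F z.1 * G z.2 * K z) (μ.prod μ) :=
  ((hF.integrable μ).mul_prod (hG.integrable μ)).mul_bdd K.continuous.aestronglyMeasurable
    (ae_of_all _ fun z => K.norm_coe_le_norm z)

theorem energy_eq_integral_prod (hF : IsPinched F) (hG : IsPinched G) :
    energy μ K F G = ∫ z : X × X, F z.1 * G z.2 * K z ∂μ.prod μ := by
  rw [integral_prod _ (hF.integrable_mul_mul_kernel hG K)]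
  simp only [energy, potential, ← integral_const_mul, mul_assoc, mul_comm (G _)]

theorem energy_comm (hK : ∀ x y, K (x, y) = K (y, x)) (hF : IsPinched F) (hG : IsPinched G) :
    energy μ K F G = energy μ K G F := by
  rw [energy_eq_integral_prod hF hG, energy_eq_integral_prod hG hF, ← integral_prod_swap]
  refine integral_congr_ae (ae_of_all _ fun z => ?_)
  change F z.2 * G z.1 * K (z.2, z.1) = G z.1 * F z.2 * K (z.1, z.2)
  rw [hK, mul_comm (F _)]

end Energy

section Extremal

open scoped BoundedContinuousFunction

theorem isCompact_setOf_dist_le {X M Y : Type*} [TopologicalSpace X] [CompactSpace X]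
    [PseudoMetricSpace M] [MetricSpace Y] (κ : C(X, M)) {s : Set Y} (hs : IsCompact s) :
    IsCompact {W : X →ᵇ Y | (∀ x, W x ∈ s) ∧ ∀ x y, dist (W x) (W y) ≤ dist (κ x) (κ y)} := by
  refine BoundedContinuousFunction.arzela_ascoli₂ s hs _ ?_ (fun W x hW => hW.1 x) fun x => ?_
  · simp only [Set.ofPred_and, Set.ofPred_forall]
    have heval (x : X) : Continuous fun W : X →ᵇ Y => W x := continuous_eval_const x
    exact (isClosed_iInter fun x => hs.isClosed.preimage (heval x)).inter
      (isClosed_iInter fun x => isClosed_iInter fun y =>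
        isClosed_le ((heval x).dist (heval y)) continuous_const)
  · refine Metric.equicontinuousAt_of_continuity_modulus (fun y => dist (κ x) (κ y)) ?_ _
      (.of_forall fun y W => W.2.2 x y)
    have h : Continuous fun y => dist (κ x) (κ y) := by fun_prop
    simpa using h.tendsto x

variable {X : Type*} [TopologicalSpace X] [CompactSpace X] [MeasurableSpace X] [BorelSpace X]
  {μ : Measure X} {K : C(X × X, ℝ)} {F G : X → ℝ} {p m : ℝ}

/-- The quotient `‖K F‖_{L^q} / ‖F‖_{L^p}`, where `q` is the conjugate exponent of `p`, whose
infimum is the best constant in the reversed inequality. -/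
noncomputable def hlsQuotient (μ : Measure X) (K : C(X × X, ℝ)) (p : ℝ) (F : X → ℝ) : ℝ :=
  rpowNorm μ p.conjExponent (potential μ K F) / rpowNorm μ p F

/-- A continuous positive pair `(F, G)` attaining the best constant `m` in
`m * ‖F‖_{L^p} * ‖G‖_{L^p} ≤ energy μ K F G`, together with the Euler–Lagrange equation in the
variable `F`, normalised to have no multiplicative constant. -/
structure IsExtremalPair (μ : Measure X) (K : C(X × X, ℝ)) (p m : ℝ) (F G : X → ℝ) : Prop where
  continuous_left : Continuous F
  continuous_right : Continuous G
  pos_left : ∀ x, 0 < F x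
  pos_right : ∀ x, 0 < G x
  le_energy : ∀ ⦃F' G'⦄, IsPinched F' → IsPinched G' →
    m * (rpowNorm μ p F' * rpowNorm μ p G') ≤ energy μ K F' G'
  energy_eq : energy μ K F G = m * (rpowNorm μ p F * rpowNorm μ p G)
  eulerLagrange : F = holderDual p (potential μ K G)

theorem IsExtremalPair.isPinched_left (h : IsExtremalPair μ K p m F G) : IsPinched F :=
  .of_continuous h.continuous_left h.pos_left

theorem IsExtremalPair.isPinched_right (h : IsExtremalPair μ K p m F G) : IsPinched G :=
  .of_continuous h.continuous_right h.pos_right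

variable [IsFiniteMeasure μ]

theorem continuous_integral_of_continuous_uncurry {A : Type*} [TopologicalSpace A]
    [FirstCountableTopology A] [LocallyCompactSpace A] {f : A → X → ℝ}
    (hf : Continuous (Function.uncurry f)) : Continuous fun a => ∫ x, f a x ∂μ := by
  simpa using continuous_parametric_integral_of_continuous (μ := μ) hf isCompact_univ

theorem continuous_rpowNorm {A : Type*} [TopologicalSpace A] [FirstCountableTopology A]
    [LocallyCompactSpace A] [NeZero μ] {f : A → X → ℝ} (hf : Continuous (Function.uncurry f))
    (hpos : ∀ a x, 0 < f a x) (r : ℝ) : Continuous fun a => rpowNorm μ r (f a) := by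
  have hpinched (a : A) : IsPinched (f a) := .of_continuous (hf.curry_right) (hpos a)
  refine (continuous_integral_of_continuous_uncurry ?_).rpow_const
    fun a => Or.inl (((hpinched a).rpow r).integral_pos μ).ne'
  exact hf.rpow_const fun z => Or.inl (hpos z.1 z.2).ne'

theorem continuous_hlsQuotient {A : Type*} [TopologicalSpace A] [FirstCountableTopology A]
    [LocallyCompactSpace A] [FirstCountableTopology X] [T2Space X] [NeZero μ] (hK : ∀ z, 0 < K z)
    {f : A → X → ℝ} (hf : Continuous (Function.uncurry f)) (hpos : ∀ a x, 0 < f a x) :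
    Continuous fun a => hlsQuotient μ K p (f a) := by
  have hpinched (a : A) : IsPinched (f a) := .of_continuous (hf.curry_right) (hpos a)
  refine (continuous_rpowNorm ?_ (fun a => ((hpinched a).potential_of_pos hK).pos) _).div
    (continuous_rpowNorm hf hpos p) fun a => (rpowNorm_pos (hpinched a) p).ne'
  refine continuous_integral_of_continuous_uncurry (A := A × X) ?_
  simp only [Function.uncurry_def]
  fun_prop

theorem hlsQuotient_const_mul [NeZero μ] (hp : p ∈ Set.Ioo 0 1) (hK : ∀ z, 0 < K z)
    (hF : IsPinched F) {c : ℝ} (hc : 0 < c) :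
    hlsQuotient μ K p (fun x => c * F x) = hlsQuotient μ K p F := by
  have hpot : potential μ K (fun x => c * F x) = fun x => c * potential μ K F x :=
    funext (potential_const_mul c F)
  rw [hlsQuotient, hpot, rpowNorm_const_mul hc.le (conjExponent_ne_zero hp)
      fun x => ((hF.potential_of_pos hK).pos x).le,
    rpowNorm_const_mul hc.le hp.1.ne' fun x => (hF.pos x).le, mul_div_mul_left _ _ hc.ne',
    hlsQuotient]

theorem hlsQuotient_mul_le_energy [NeZero μ] (hp : p ∈ Set.Ioo 0 1) (hK : ∀ z, 0 < K z)
    (hF : IsPinched F) (hG : IsPinched G) :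
    hlsQuotient μ K p F * (rpowNorm μ p G * rpowNorm μ p F) ≤ energy μ K G F := by
  rw [hlsQuotient, mul_left_comm, div_mul_cancel₀ _ (rpowNorm_pos hF p).ne']
  exact rpowNorm_mul_rpowNorm_le_integral_mul hp hG (hF.potential_of_pos hK)

theorem energy_holderDual_potential [NeZero μ] (hp : p ∈ Set.Ioo 0 1) (hK : ∀ z, 0 < K z)
    (hF : IsPinched F) :
    energy μ K (holderDual p (potential μ K F)) F = hlsQuotient μ K p F *
      (rpowNorm μ p (holderDual p (potential μ K F)) * rpowNorm μ p F) := by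
  rw [hlsQuotient, mul_left_comm, div_mul_cancel₀ _ (rpowNorm_pos hF p).ne']
  exact integral_holderDual_mul hp (hF.potential_of_pos hK)

theorem exists_holderDual_potential_eq_const_mul [NeZero μ] (hK : ∀ z, 0 < K z) {a b : ℝ}
    (hab : ∀ z, K z ∈ Set.Icc a b) (p : ℝ) (hF : IsPinched F) :
    ∃ W : X →ᵇ ℝ, ((∀ x, W x ∈ Set.Icc a b) ∧
        ∀ x y, dist (W x) (W y) ≤ dist (K.curry x) (K.curry y)) ∧
      ∃ c > 0, holderDual p W = fun x => c * holderDual p (potential μ K F) x := by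
  have hI := hF.integral_pos μ
  have hpot := hF.potential_of_pos (μ := μ) hK
  refine ⟨.mkOfCompact ⟨fun x => (∫ y, F y ∂μ)⁻¹ * potential μ K F x,
    continuous_const.mul (continuous_potential hF)⟩, ⟨fun x => ⟨?_, ?_⟩, fun x y => ?_⟩,
    (∫ y, F y ∂μ)⁻¹ ^ (1 / (p - 1)), Real.rpow_pos_of_pos (inv_pos.2 hI) _, funext fun x => ?_⟩
  · rw [BoundedContinuousFunction.mkOfCompact_apply, ContinuousMap.coe_mk, inv_mul_eq_div,
      le_div_iff₀ hI]
    exact mul_integral_le_potential (fun z => (hab z).1) hF x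
  · rw [BoundedContinuousFunction.mkOfCompact_apply, ContinuousMap.coe_mk, inv_mul_eq_div,
      div_le_iff₀ hI]
    exact potential_le_mul_integral (fun z => (hab z).2) hF x
  · simp only [BoundedContinuousFunction.mkOfCompact_apply, ContinuousMap.coe_mk]
    rw [Real.dist_eq, ← mul_sub, abs_mul, abs_of_pos (inv_pos.2 hI), inv_mul_le_iff₀ hI, mul_comm]
    exact dist_potential_le hF x y
  · exact Real.mul_rpow (inv_pos.2 hI).le (hpot.pos x).le

variable [SecondCountableTopology X] [NeZero μ]

theorem hlsQuotient_holderDual_potential_le (hp : p ∈ Set.Ioo 0 1) (hK : ∀ z, 0 < K z)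
    (hsymm : ∀ x y, K (x, y) = K (y, x)) (hF : IsPinched F) :
    hlsQuotient μ K p (holderDual p (potential μ K F)) ≤ hlsQuotient μ K p F := by
  have hD := (hF.potential_of_pos (μ := μ) hK).holderDual p
  have h := hlsQuotient_mul_le_energy (μ := μ) hp hK hD hF
  rw [energy_comm hsymm hF hD, energy_holderDual_potential hp hK hF, mul_comm (rpowNorm μ p F)] at h
  exact le_of_mul_le_mul_right h (mul_pos (rpowNorm_pos hD p) (rpowNorm_pos hF p))

variable [T2Space X]

/- Replacing `F` by the dual of its potential does not increase the quotient, and up to a factor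
the potentials are equicontinuous and uniformly pinched, so the minimum may be sought in a compact
set. -/
theorem exists_forall_hlsQuotient_le (hp : p ∈ Set.Ioo 0 1) (hK : ∀ z, 0 < K z)
    (hsymm : ∀ x y, K (x, y) = K (y, x)) :
    ∃ F, IsPinched F ∧ ∀ F', IsPinched F' → hlsQuotient μ K p F ≤ hlsQuotient μ K p F' := by
  obtain ⟨-, a, ha, b, -, hab⟩ := IsPinched.of_continuous K.continuous hK
  set A : Set (X →ᵇ ℝ) := {W | (∀ x, W x ∈ Set.Icc a b) ∧
    ∀ x y, dist (W x) (W y) ≤ dist (K.curry x) (K.curry y)}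
  have : CompactSpace A :=
    isCompact_iff_compactSpace.1 (isCompact_setOf_dist_le K.curry isCompact_Icc)
  have hWpos (W : A) (x : X) : 0 < W.1 x := ha.trans_le (W.2.1 x).1
  have hdual_pos (W : A) (x : X) : 0 < holderDual p W.1 x := Real.rpow_pos_of_pos (hWpos W x) _
  have hdual_cont : Continuous (Function.uncurry fun (W : A) x => holderDual p W.1 x) := by
    have : Continuous fun z : A × X => z.1.1 z.2 := by fun_prop
    exact this.rpow_const fun z => Or.inl (hWpos z.1 z.2).ne'
  have hcover {F : X → ℝ} (hF : IsPinched F) : ∃ W : A,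
      hlsQuotient μ K p (holderDual p W.1) =
        hlsQuotient μ K p (holderDual p (potential μ K F)) := by
    obtain ⟨W, hW, c, hc, hWF⟩ := exists_holderDual_potential_eq_const_mul (μ := μ) hK hab p hF
    exact ⟨⟨W, hW⟩, hWF ▸ hlsQuotient_const_mul hp hK ((hF.potential_of_pos hK).holderDual p) hc⟩
  have : Nonempty A := (hcover (.const one_pos)).nonempty
  obtain ⟨W, -, hW⟩ := isCompact_univ.exists_isMinOn Set.univ_nonempty
    (continuous_hlsQuotient (p := p) (μ := μ) hK hdual_cont hdual_pos).continuousOn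
  refine ⟨holderDual p W.1, .of_continuous (hdual_cont.curry_right) (hdual_pos W),
    fun F hF => ?_⟩
  obtain ⟨W', hW'⟩ := hcover hF
  calc hlsQuotient μ K p (holderDual p W.1) ≤ hlsQuotient μ K p (holderDual p W'.1) := hW trivial
    _ = hlsQuotient μ K p (holderDual p (potential μ K F)) := hW'
    _ ≤ hlsQuotient μ K p F := hlsQuotient_holderDual_potential_le hp hK hsymm hF

theorem exists_isExtremalPair (hp : p ∈ Set.Ioo 0 1) (hK : ∀ z, 0 < K z)
    (hsymm : ∀ x y, K (x, y) = K (y, x)) : ∃ m F G, IsExtremalPair μ K p m F G := by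
  obtain ⟨F₀, hF₀, hmin⟩ := exists_forall_hlsQuotient_le (μ := μ) hp hK hsymm
  have continuous_dual {H : X → ℝ} (hH : IsPinched H) :
      Continuous (holderDual p (potential μ K H)) :=
    (continuous_potential hH).rpow_const fun x => Or.inl ((hH.potential_of_pos hK).pos x).ne'
  have hG := (hF₀.potential_of_pos (μ := μ) hK).holderDual p
  have hF := (hG.potential_of_pos (μ := μ) hK).holderDual p
  have hle ⦃F' G' : X → ℝ⦄ (hF' : IsPinched F') (hG' : IsPinched G') :
      hlsQuotient μ K p F₀ * (rpowNorm μ p F' * rpowNorm μ p G') ≤ energy μ K F' G' :=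
    (mul_le_mul_of_nonneg_right (hmin G' hG')
      (mul_pos (rpowNorm_pos hF' p) (rpowNorm_pos hG' p)).le).trans
      (hlsQuotient_mul_le_energy hp hK hG' hF')
  refine ⟨hlsQuotient μ K p F₀, _, _, continuous_dual hG, continuous_dual hF₀, hF.pos, hG.pos,
    hle, (hle hF hG).antisymm' ?_, rfl⟩
  rw [energy_holderDual_potential hp hK hG]
  exact mul_le_mul_of_nonneg_right (hlsQuotient_holderDual_potential_le hp hK hsymm hF₀)
    (mul_pos (rpowNorm_pos hF p) (rpowNorm_pos hG p)).le

end Extremal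

section Polar

variable {E : Type*} [NormedAddCommGroup E] [NormedSpace ℝ E] [FiniteDimensional ℝ E]
  [MeasureSpace E] [BorelSpace E] [(volume : Measure E).IsAddHaarMeasure]

theorem lintegral_eq_lintegral_sphere_lintegral_Ioi [Nontrivial E] {g : E → ℝ≥0∞}
    (hg : Measurable g) :
    ∫⁻ x, g x = ∫⁻ ξ : sphere (0 : E) 1, ∫⁻ r : Set.Ioi (0 : ℝ), g (r.1 • ξ.1)
      ∂(Measure.volumeIoiPow (Module.finrank ℝ E - 1)) ∂((volume : Measure E).toSphere) := by
  have hm : Measurable fun z : sphere (0 : E) 1 × Set.Ioi (0 : ℝ) => g (z.2.1 • z.1.1) :=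
    hg.comp (by fun_prop)
  rw [← lintegral_prod _ hm.aemeasurable,
    ← (volume : Measure E).measurePreserving_homeomorphUnitSphereProd.lintegral_comp hm]
  calc ∫⁻ x, g x = ∫⁻ x : ({0}ᶜ : Set E), g x ∂(volume : Measure E).comap Subtype.val := by
        rw [lintegral_subtype_comap (measurableSet_singleton (0 : E)).compl g,
          restrict_compl_singleton]
    _ = _ := lintegral_congr fun x => by simp [smul_smul, norm_ne_zero_iff.2 x.2]

theorem lintegral_setOf_lt_one_of_homogeneous {n : ℕ} (hn : Module.finrank ℝ E = n + 1)
    {u : E → ℝ} (hu : Measurable u) (hpos : ∀ x ≠ 0, 0 < u x)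
    (hu_smul : ∀ (r : ℝ) (x : E), 0 < r → u (r • x) = r * u x) {h : E → ℝ≥0∞}
    (hh : Measurable h) (hh_smul : ∀ (r : ℝ) (x : E), 0 < r → h (r • x) = h x) :
    ∫⁻ x in {x | u x < 1}, h x = ENNReal.ofReal (1 / (n + 1)) *
      ∫⁻ ξ : sphere (0 : E) 1, ENNReal.ofReal ((u ξ ^ (n + 1))⁻¹) * h ξ
        ∂((volume : Measure E).toSphere) := by
  have : Nontrivial E := Module.nontrivial_of_finrank_eq_succ hn
  have hs : MeasurableSet {x | u x < 1} := measurableSet_lt hu measurable_const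
  rw [← lintegral_indicator hs, lintegral_eq_lintegral_sphere_lintegral_Ioi (hh.indicator hs),
    ← lintegral_const_mul _ (by fun_prop)]
  refine lintegral_congr fun ξ => ?_
  have huξ : 0 < u ξ := hpos _ (ne_zero_of_mem_unit_sphere ξ)
  let R : Set.Ioi (0 : ℝ) := ⟨1 / u ξ, one_div_pos.2 huξ⟩
  have mem_iff (r : Set.Ioi (0 : ℝ)) : r.1 • ξ.1 ∈ {x | u x < 1} ↔ r ∈ Set.Iio R := by
    rw [Set.mem_ofPred_eq, hu_smul _ _ r.2, ← lt_div_iff₀ huξ]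
    rfl
  have hray (r : Set.Ioi (0 : ℝ)) : {x | u x < 1}.indicator h (r.1 • ξ.1) =
      (Set.Iio R).indicator (fun _ => h ξ) r := by
    simp only [Set.indicator, mem_iff, hh_smul _ _ r.2]
  simp only [hray]
  rw [lintegral_indicator_const measurableSet_Iio, hn, Nat.add_sub_cancel,
    Measure.volumeIoiPow_apply_Iio, ← mul_assoc, ← ENNReal.ofReal_mul (by positivity), mul_comm,
    one_div_pow, one_div_mul_eq_div, one_div]

end Polar

theorem det_id_add_smulRight {E : Type*} [NormedAddCommGroup E] [NormedSpace ℝ E]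
    [FiniteDimensional ℝ E] (f : E →L[ℝ] ℝ) (v : E) :
    (.id ℝ E + f.smulRight v : E →L[ℝ] E).det = 1 + f v := by
  have : ((.id ℝ E + f.smulRight v : E →L[ℝ] E) : E →ₗ[ℝ] E) = LinearMap.transvection f v := by
    ext w
    simp [LinearMap.transvection]
  rw [ContinuousLinearMap.det, this, LinearMap.transvection.det]
  rfl

section Boost

open scoped InnerProductSpace

variable {E : Type*} [NormedAddCommGroup E] [InnerProductSpace ℝ E] {e : E}

/-- The Lorentz boost of rapidity `t` in the direction `e`, where `E` is identified with the light
cone `{(x, ‖x‖)}` of `E × ℝ`. Its action on rays is a conformal transformation of the sphere. -/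
noncomputable def boost (e : E) (t : ℝ) (x : E) : E :=
  x + ((Real.cosh t - 1) * ⟪e, x⟫_ℝ + Real.sinh t * ‖x‖) • e

theorem continuous_boost (e : E) (t : ℝ) : Continuous (boost e t) := by
  unfold boost
  fun_prop

theorem boost_zero_right (e : E) (t : ℝ) : boost e t 0 = 0 := by
  simp [boost]

theorem boost_smul (e : E) (t : ℝ) {r : ℝ} (hr : 0 ≤ r) (x : E) :
    boost e t (r • x) = r • boost e t x := by
  simp only [boost, smul_add, smul_smul, inner_smul_right, norm_smul, Real.norm_of_nonneg hr]
  congr 2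
  ring

theorem inner_boost (he : ‖e‖ = 1) (t : ℝ) (x : E) :
    ⟪e, boost e t x⟫_ℝ = Real.cosh t * ⟪e, x⟫_ℝ + Real.sinh t * ‖x‖ := by
  rw [boost, inner_add_right, inner_smul_right, real_inner_self_eq_norm_sq, he]
  ring

theorem inner_boost_boost (he : ‖e‖ = 1) (t : ℝ) (x y : E) :
    ⟪boost e t x, boost e t y⟫_ℝ = ⟪x, y⟫_ℝ - ⟪e, x⟫_ℝ * ⟪e, y⟫_ℝ +
      (Real.cosh t * ⟪e, x⟫_ℝ + Real.sinh t * ‖x‖) *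
        (Real.cosh t * ⟪e, y⟫_ℝ + Real.sinh t * ‖y‖) := by
  simp only [boost, inner_add_left, inner_add_right, inner_smul_left, inner_smul_right,
    real_inner_comm e x, real_inner_self_eq_norm_sq, he, conj_trivial]
  ring

theorem abs_inner_le_norm (he : ‖e‖ = 1) (x : E) : |⟪e, x⟫_ℝ| ≤ ‖x‖ := by
  simpa [he] using abs_real_inner_le_norm e x

theorem norm_boost (he : ‖e‖ = 1) (t : ℝ) (x : E) :
    ‖boost e t x‖ = Real.cosh t * ‖x‖ + Real.sinh t * ⟪e, x⟫_ℝ := by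
  have hsinh : |Real.sinh t| ≤ Real.cosh t := abs_le_of_sq_le_sq (by linarith [Real.cosh_sq t])
    (Real.cosh_pos t).le
  have hnonneg : 0 ≤ Real.cosh t * ‖x‖ + Real.sinh t * ⟪e, x⟫_ℝ := by
    have := mul_le_mul hsinh (abs_inner_le_norm he x) (abs_nonneg _) (Real.cosh_pos t).le
    rw [← abs_mul] at this
    linarith [neg_abs_le (Real.sinh t * ⟪e, x⟫_ℝ)]
  rw [← sq_eq_sq₀ (norm_nonneg _) hnonneg, ← real_inner_self_eq_norm_sq, inner_boost_boost he,
    real_inner_self_eq_norm_sq]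
  linear_combination (⟪e, x⟫_ℝ ^ 2 - ‖x‖ ^ 2) * Real.cosh_sq t

theorem norm_boost_mul_sub_inner (he : ‖e‖ = 1) (t : ℝ) (x y : E) :
    ‖boost e t x‖ * ‖boost e t y‖ - ⟪boost e t x, boost e t y⟫_ℝ = ‖x‖ * ‖y‖ - ⟪x, y⟫_ℝ := by
  rw [inner_boost_boost he, norm_boost he, norm_boost he]
  linear_combination (‖x‖ * ‖y‖ - ⟪e, x⟫_ℝ * ⟪e, y⟫_ℝ) * Real.cosh_sq t

theorem boost_neg_boost (he : ‖e‖ = 1) (t : ℝ) (x : E) : boost e (-t) (boost e t x) = x := by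
  rw [boost, inner_boost he, norm_boost he, Real.cosh_neg, Real.sinh_neg]
  rw [boost, add_assoc, ← add_smul, add_eq_left]
  convert zero_smul ℝ e
  linear_combination ⟪e, x⟫_ℝ * Real.cosh_sq t

theorem boost_ne_zero (he : ‖e‖ = 1) (t : ℝ) {x : E} (hx : x ≠ 0) : boost e t x ≠ 0 := fun h =>
  hx (by rw [← boost_neg_boost he t x, h, boost_zero_right])

theorem boost_image_setOf_norm_boost_lt_one (he : ‖e‖ = 1) (t : ℝ) :
    boost e t '' {x | ‖boost e t x‖ < 1} = {x | ‖x‖ < 1} := by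
  refine Set.Subset.antisymm (Set.image_subset_iff.2 fun x hx => hx) fun y hy => ?_
  have h : boost e t (boost e (-t) y) = y := by simpa using boost_neg_boost he (-t) y
  exact ⟨boost e (-t) y, by rwa [Set.mem_ofPred_eq, h], h⟩

theorem hasFDerivAt_norm {x : E} (hx : x ≠ 0) :
    HasFDerivAt (fun x : E => ‖x‖) (‖x‖⁻¹ • innerSL ℝ x) x := by
  have h := (hasStrictFDerivAt_norm_sq x).hasFDerivAt.sqrt (by simpa using hx)
  simp only [Real.sqrt_sq (norm_nonneg _)] at h
  convert! h using 1
  ext v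
  simp only [smul_apply, coe_innerSL_apply, smul_eq_mul, one_div, mul_inv_rev, nsmul_eq_mul,
    Nat.cast_ofNat]
  field_simp

/-- The derivative of `boost e t` away from the origin. -/
noncomputable def boostDeriv (e : E) (t : ℝ) (x : E) : E →L[ℝ] E :=
  .id ℝ E + ((Real.cosh t - 1) • innerSL ℝ e + Real.sinh t • ‖x‖⁻¹ • innerSL ℝ x).smulRight e

theorem hasFDerivAt_boost (e : E) (t : ℝ) {x : E} (hx : x ≠ 0) :
    HasFDerivAt (boost e t) (boostDeriv e t x) x :=
  (hasFDerivAt_id x).add ((((innerSL ℝ e).hasFDerivAt.const_mul _).add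
    ((hasFDerivAt_norm hx).const_mul _)).smul_const e)

theorem det_boostDeriv [FiniteDimensional ℝ E] (he : ‖e‖ = 1) (t : ℝ) {x : E} (hx : x ≠ 0) :
    (boostDeriv e t x).det = ‖boost e t x‖ / ‖x‖ := by
  have hx' : ‖x‖ ≠ 0 := norm_ne_zero_iff.2 hx
  rw [boostDeriv, det_id_add_smulRight, norm_boost he]
  simp only [add_apply, smul_apply, coe_innerSL_apply, inner_self_eq_norm_sq_to_K, he,
    Real.ringHom_apply, one_pow, smul_eq_mul, mul_one, real_inner_comm x e]
  field_simp
  ring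

end Boost

section Conformal

open scoped InnerProductSpace
open NormedSpace (normalize norm_normalize)

variable {E : Type*} [NormedAddCommGroup E] [InnerProductSpace ℝ E]

local notation "𝕊" => sphere (0 : E) 1
local notation "σ" => Measure.toSphere (volume : Measure E)

theorem norm_boost_pos (e ξ : 𝕊) (t : ℝ) : 0 < ‖boost (e : E) t ξ‖ :=
  norm_pos_iff.2 (boost_ne_zero (norm_eq_of_mem_sphere e) t (ne_zero_of_mem_unit_sphere ξ))

/-- The conformal transformation of the sphere induced by a boost. -/
noncomputable def sphereBoost (e : 𝕊) (t : ℝ) (ξ : 𝕊) : 𝕊 :=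
  ⟨normalize (boost (e : E) t ξ),
    mem_sphere_zero_iff_norm.2 (norm_normalize (norm_pos_iff.1 (norm_boost_pos e ξ t)))⟩

theorem continuous_norm_boost_rpow (e : 𝕊) (t r : ℝ) :
    Continuous fun ξ : 𝕊 => ‖boost (e : E) t ξ‖ ^ r :=
  ((continuous_boost (e : E) t).comp continuous_subtype_val).norm.rpow_const
    fun ξ => Or.inl (norm_boost_pos e ξ t).ne'

theorem continuous_sphereBoost (e : 𝕊) (t : ℝ) : Continuous (sphereBoost e t) := by
  have h := (continuous_boost (e : E) t).comp (continuous_subtype_val (p := (· ∈ 𝕊)))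
  exact .subtype_mk (.smul (h.norm.inv₀ fun ξ => (norm_boost_pos e ξ t).ne') h) _

theorem norm_boost_neg_sphereBoost (e ξ : 𝕊) (t : ℝ) :
    ‖boost (e : E) (-t) (sphereBoost e t ξ)‖ = ‖boost (e : E) t ξ‖⁻¹ := by
  have h := (inv_pos.2 (norm_boost_pos e ξ t)).le
  rw [show (sphereBoost e t ξ : E) = ‖boost (e : E) t ξ‖⁻¹ • boost (e : E) t ξ from rfl,
    boost_smul _ _ h, boost_neg_boost (norm_eq_of_mem_sphere e),
    norm_smul, norm_eq_of_mem_sphere, mul_one, Real.norm_of_nonneg h]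

theorem dist_sq_eq_dist_sphereBoost_sq (e ξ η : 𝕊) (t : ℝ) :
    dist ξ η ^ 2 = dist (sphereBoost e t ξ) (sphereBoost e t η) ^ 2 *
      (‖boost (e : E) t ξ‖ * ‖boost (e : E) t η‖) := by
  have hξ := norm_boost_pos e ξ t
  have hη := norm_boost_pos e η t
  have h := norm_boost_mul_sub_inner (norm_eq_of_mem_sphere e) t (ξ : E) η
  simp only [Subtype.dist_eq, dist_eq_norm, norm_sub_sq_real, norm_eq_of_mem_sphere] at h ⊢
  simp only [sphereBoost, NormedSpace.normalize, inner_smul_left, inner_smul_right, conj_trivial]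
  field_simp
  linear_combination (-2) * h

/-- The kernel `dist x y ^ s`; for the unit sphere and `s = α - n`, the Riesz kernel. -/
noncomputable def distKernel (X : Type*) [PseudoMetricSpace X] {s : ℝ} (hs : 0 < s) :
    C(X × X, ℝ) :=
  ⟨fun z => dist z.1 z.2 ^ s, continuous_dist.rpow_const fun _ => Or.inr hs.le⟩

theorem distKernel_apply {X : Type*} [PseudoMetricSpace X] {s : ℝ} (hs : 0 < s) (x y : X) :
    distKernel X hs (x, y) = dist x y ^ s :=
  rfl

theorem distKernel_eq_distKernel_sphereBoost {s : ℝ} (hs : 0 < s) (e ξ η : 𝕊) (t : ℝ) :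
    distKernel 𝕊 hs (ξ, η) = distKernel 𝕊 hs (sphereBoost e t ξ, sphereBoost e t η) *
      (‖boost (e : E) t ξ‖ ^ (s / 2) * ‖boost (e : E) t η‖ ^ (s / 2)) := by
  have sq_rpow {d : ℝ} (hd : 0 ≤ d) : (d ^ 2) ^ (s / 2) = d ^ s := by
    rw [← Real.rpow_natCast_mul hd, Nat.cast_ofNat, mul_div_cancel₀ _ two_ne_zero]
  rw [distKernel_apply, distKernel_apply, ← sq_rpow dist_nonneg,
    dist_sq_eq_dist_sphereBoost_sq e ξ η t, Real.mul_rpow (by positivity) (by positivity),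
    sq_rpow dist_nonneg, Real.mul_rpow (norm_nonneg _) (norm_nonneg _)]

variable [MeasurableSpace E] [BorelSpace E]

theorem IsPinched.comp_sphereBoost {F : 𝕊 → ℝ} (hF : IsPinched F) (e : 𝕊) (t : ℝ) :
    IsPinched fun ξ => F (sphereBoost e t ξ) := by
  obtain ⟨hFm, a, ha, b, hb, hab⟩ := hF
  exact ⟨hFm.comp (continuous_sphereBoost e t).measurable, a, ha, b, hb, fun ξ => hab _⟩

variable [FiniteDimensional ℝ E]

theorem setLIntegral_normalize_boost (e : 𝕊) (t : ℝ) (g : E → ℝ≥0∞) :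
    ∫⁻ x in {x : E | ‖boost (e : E) t x‖ < 1},
        ENNReal.ofReal (‖boost (e : E) t x‖ / ‖x‖) * g (normalize (boost (e : E) t x)) =
      ∫⁻ x in {x : E | ‖x‖ < 1}, g (normalize x) := by
  have he := norm_eq_of_mem_sphere e
  have hinj : Function.Injective (boost (e : E) t) :=
    Function.LeftInverse.injective (boost_neg_boost he t)
  have : Nontrivial E := ⟨⟨e, 0, ne_zero_of_mem_unit_sphere e⟩⟩
  have hdiff (s : Set E) (f : E → ℝ≥0∞) : ∫⁻ x in s \ {0}, f x = ∫⁻ x in s, f x :=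
    setLIntegral_congr (sdiff_null_ae_eq_self (measure_singleton 0))
  have hs : MeasurableSet ({x : E | ‖boost (e : E) t x‖ < 1} \ {0}) :=
    (measurableSet_lt (continuous_boost (e : E) t).norm.measurable measurable_const).diff
      (measurableSet_singleton 0)
  have himage :
      boost (e : E) t '' ({x | ‖boost (e : E) t x‖ < 1} \ {0}) = {x | ‖x‖ < 1} \ {0} := by
    rw [Set.image_sdiff hinj, boost_image_setOf_norm_boost_lt_one he, Set.image_singleton,
      boost_zero_right]
  rw [← hdiff, ← hdiff {x : E | ‖x‖ < 1}, ← himage,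
    lintegral_image_eq_lintegral_abs_det_fderiv_mul volume hs
    (fun x hx => (hasFDerivAt_boost (e : E) t hx.2).hasFDerivWithinAt) hinj.injOn]
  refine setLIntegral_congr_fun hs fun x hx => ?_
  rw [det_boostDeriv he t hx.2, abs_of_nonneg (by positivity)]

theorem lintegral_norm_boost_mul_normalize_boost {n : ℕ} (hn : Module.finrank ℝ E = n + 1) (e : 𝕊)
    (t : ℝ) {g : E → ℝ≥0∞} (hg : Measurable g) :
    ∫⁻ ξ : 𝕊, ENNReal.ofReal ((‖boost (e : E) t ξ‖ ^ n)⁻¹) * g (normalize (boost (e : E) t ξ)) ∂σ =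
      ∫⁻ ξ : 𝕊, g ξ ∂σ := by
  have he := norm_eq_of_mem_sphere e
  have hnorm : Measurable fun x : E => g (normalize x) := by
    unfold NormedSpace.normalize
    fun_prop
  have hboost := (continuous_boost (e : E) t).measurable
  have hweight : Measurable fun x : E =>
      ENNReal.ofReal (‖boost (e : E) t x‖ / ‖x‖) * g (normalize (boost (e : E) t x)) :=
    (hboost.norm.div measurable_norm).ennreal_ofReal.mul (hnorm.comp hboost)
  have h := setLIntegral_normalize_boost e t g
  rw [lintegral_setOf_lt_one_of_homogeneous hn measurable_norm (fun x hx => norm_pos_iff.2 hx)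
      (fun r x hr => by rw [norm_smul, Real.norm_of_nonneg hr.le]) hnorm
      (fun r x hr => by rw [NormedSpace.normalize_smul_of_pos hr]),
    lintegral_setOf_lt_one_of_homogeneous hn hboost.norm
      (fun x hx => norm_pos_iff.2 (boost_ne_zero he t hx))
      (fun r x hr => by rw [boost_smul _ _ hr.le, norm_smul, Real.norm_of_nonneg hr.le])
      hweight
      (fun r x hr => by
        rw [boost_smul _ _ hr.le, NormedSpace.normalize_smul_of_pos hr, norm_smul, norm_smul,
          mul_div_mul_left _ _ (norm_ne_zero_iff.2 hr.ne')]),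
    ENNReal.mul_right_inj (ENNReal.ofReal_pos.2 (by positivity)).ne' ENNReal.ofReal_ne_top] at h
  simp only [norm_eq_of_mem_sphere, one_pow, inv_one, ENNReal.ofReal_one, one_mul, div_one,
    NormedSpace.normalize_eq_self_of_norm_eq_one] at h
  rw [← h]
  refine lintegral_congr fun ξ => ?_
  have hξ := norm_boost_pos e ξ t
  rw [← mul_assoc, ← ENNReal.ofReal_mul (by positivity)]
  congr 2
  rw [pow_succ]
  field_simp

theorem measurePreserving_sphereBoost {n : ℕ} (hn : Module.finrank ℝ E = n + 1) (e : 𝕊) (t : ℝ) :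
    MeasurePreserving (sphereBoost e t)
      (Measure.withDensity σ fun ξ => ENNReal.ofReal ((‖boost (e : E) t ξ‖ ^ n)⁻¹)) σ := by
  have hm := (continuous_sphereBoost e t).measurable
  have hd : Measurable fun ξ : 𝕊 => ENNReal.ofReal ((‖boost (e : E) t ξ‖ ^ n)⁻¹) := by
    have := (continuous_boost (e : E) t).measurable
    fun_prop
  refine ⟨hm, Measure.ext_of_lintegral _ fun g hg => ?_⟩
  obtain ⟨g', hg', rfl⟩ := (MeasurableEmbedding.subtype_coe
    (isClosed_sphere (x := (0 : E)) (ε := 1)).measurableSet).exists_measurable_extend hg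
    fun _ => ⟨0⟩
  rw [lintegral_map hg hm]
  refine (lintegral_withDensity_eq_lintegral_mul _ hd (hg.comp hm)).trans ?_
  exact lintegral_norm_boost_mul_normalize_boost hn e t hg'

theorem integral_norm_boost_mul_comp_sphereBoost {n : ℕ} (hn : Module.finrank ℝ E = n + 1) (e : 𝕊)
    (t : ℝ) {g : 𝕊 → ℝ} (hg : Measurable g) :
    ∫ ξ, ‖boost (e : E) t ξ‖ ^ (-n : ℝ) * g (sphereBoost e t ξ) ∂σ = ∫ ξ, g ξ ∂σ := by
  have hmp := measurePreserving_sphereBoost hn e t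
  have hd : Measurable fun ξ : 𝕊 => ENNReal.ofReal ((‖boost (e : E) t ξ‖ ^ n)⁻¹) := by
    have := (continuous_boost (e : E) t).measurable
    fun_prop
  conv_rhs => rw [← hmp.map_eq]
  rw [integral_map hmp.aemeasurable hg.aestronglyMeasurable,
    integral_withDensity_eq_integral_toReal_smul hd (ae_of_all _ fun _ => ENNReal.ofReal_lt_top)]
  refine integral_congr_ae (ae_of_all _ fun ξ => ?_)
  have hξ := norm_boost_pos e ξ t
  simp only [smul_eq_mul]
  rw [ENNReal.toReal_ofReal (by positivity), Real.rpow_neg hξ.le, Real.rpow_natCast]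

/-- The conformal action of a boost on functions of weight `r` on the sphere. -/
noncomputable def boostPullback (e : 𝕊) (t r : ℝ) (F : 𝕊 → ℝ) (ξ : 𝕊) : ℝ :=
  ‖boost (e : E) t ξ‖ ^ (-r) * F (sphereBoost e t ξ)

theorem isPinched_norm_boost_rpow (e : 𝕊) (t r : ℝ) :
    IsPinched fun ξ : 𝕊 => ‖boost (e : E) t ξ‖ ^ r :=
  .of_continuous (continuous_norm_boost_rpow e t r)
    fun ξ => Real.rpow_pos_of_pos (norm_boost_pos e ξ t) r

theorem IsPinched.boostPullback {F : 𝕊 → ℝ} (hF : IsPinched F) (e : 𝕊) (t r : ℝ) :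
    IsPinched (boostPullback e t r F) :=
  (isPinched_norm_boost_rpow e t (-r)).mul (hF.comp_sphereBoost e t)

theorem rpowNorm_boostPullback {n : ℕ} (hn : Module.finrank ℝ E = n + 1) {p r : ℝ}
    (hpr : p * r = n) {F : 𝕊 → ℝ} (hF : IsPinched F) (e : 𝕊) (t : ℝ) :
    rpowNorm σ p (boostPullback e t r F) = rpowNorm σ p F := by
  unfold rpowNorm
  congr 1
  rw [← integral_norm_boost_mul_comp_sphereBoost hn e t (hF.rpow p).measurable]
  refine integral_congr_ae (ae_of_all _ fun ξ => ?_)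
  have hξ := norm_boost_pos e ξ t
  simp only [boostPullback]
  rw [Real.mul_rpow (by positivity) (hF.pos _).le, ← Real.rpow_mul hξ.le, neg_mul, mul_comm r,
    hpr]

theorem integral_boostPullback {n : ℕ} (hn : Module.finrank ℝ E = n + 1) {F : 𝕊 → ℝ}
    (hF : IsPinched F) (e : 𝕊) (t r : ℝ) :
    ∫ ξ, boostPullback e t (n + r) F ξ ∂σ = ∫ ξ, F ξ * ‖boost (e : E) (-t) ξ‖ ^ r ∂σ := by
  rw [← integral_norm_boost_mul_comp_sphereBoost hn e t
    (hF.mul (isPinched_norm_boost_rpow e (-t) r)).measurable]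
  refine integral_congr_ae (ae_of_all _ fun ξ => ?_)
  have hξ := norm_boost_pos e ξ t
  simp only [boostPullback]
  rw [norm_boost_neg_sphereBoost, Real.inv_rpow hξ.le, ← Real.rpow_neg hξ.le, neg_add,
    Real.rpow_add hξ]
  ring

theorem potential_boostPullback {n : ℕ} (hn : Module.finrank ℝ E = n + 1) {s : ℝ} (hs : 0 < s)
    {G : 𝕊 → ℝ} (hG : IsPinched G) (e ξ : 𝕊) (t : ℝ) :
    potential σ (distKernel 𝕊 hs) (boostPullback e t (n + s / 2) G) ξ =
      ‖boost (e : E) t ξ‖ ^ (s / 2) * potential σ (distKernel 𝕊 hs) G (sphereBoost e t ξ) := by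
  have hm : Measurable fun η => distKernel 𝕊 hs (sphereBoost e t ξ, η) * G η :=
    ((distKernel 𝕊 hs).curry (sphereBoost e t ξ)).continuous.measurable.mul hG.measurable
  rw [potential, potential, ← integral_norm_boost_mul_comp_sphereBoost hn e t hm,
    ← integral_const_mul]
  refine integral_congr_ae (ae_of_all _ fun η => ?_)
  have hη := norm_boost_pos e η t
  simp only [boostPullback]
  rw [distKernel_eq_distKernel_sphereBoost hs e ξ η t, neg_add, Real.rpow_add hη,
    Real.rpow_neg hη.le (s / 2)]
  field_simp

theorem energy_boostPullback {n : ℕ} (hn : Module.finrank ℝ E = n + 1) {s : ℝ} (hs : 0 < s)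
    {F G : 𝕊 → ℝ} (hF : IsPinched F) (hG : IsPinched G) (e : 𝕊) (t : ℝ) :
    energy σ (distKernel 𝕊 hs) (boostPullback e t (n + s / 2) F)
        (boostPullback e t (n + s / 2) G) =
      energy σ (distKernel 𝕊 hs) F G := by
  rw [energy, energy, ← integral_norm_boost_mul_comp_sphereBoost hn e t
    (g := fun ξ => F ξ * potential σ (distKernel 𝕊 hs) G ξ)
    (hF.measurable.mul (continuous_potential hG).measurable)]
  refine integral_congr_ae (ae_of_all _ fun ξ => ?_)
  have hξ := norm_boost_pos e ξ t
  simp only [potential_boostPullback hn hs hG, boostPullback]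
  rw [neg_add, Real.rpow_add hξ, Real.rpow_neg hξ.le (s / 2)]
  field_simp

/-- Only the regularisation term `ε * ∫ F * ∫ G` of the energy changes along a conformal orbit. -/
theorem IsExtremalPair.integral_mul_integral_le {n : ℕ} (hn : Module.finrank ℝ E = n + 1) {s : ℝ}
    {hs : 0 < s} {ε m p : ℝ} (hε : 0 < ε) (hp : p * (n + s / 2) = n) {F G : 𝕊 → ℝ}
    (h : IsExtremalPair σ (distKernel 𝕊 hs + .const _ ε) p m F G) (e : 𝕊) (t : ℝ) :
    (∫ ξ, F ξ ∂σ) * ∫ ξ, G ξ ∂σ ≤ (∫ ξ, F ξ * ‖boost (e : E) t ξ‖ ^ (s / 2) ∂σ) *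
      ∫ ξ, G ξ * ‖boost (e : E) t ξ‖ ^ (s / 2) ∂σ := by
  have hF := h.isPinched_left
  have hG := h.isPinched_right
  have hF' := hF.boostPullback e (-t) (n + s / 2)
  have hG' := hG.boostPullback e (-t) (n + s / 2)
  have hle := h.le_energy hF' hG'
  rw [rpowNorm_boostPullback hn hp hF, rpowNorm_boostPullback hn hp hG, ← h.energy_eq,
    energy_add_const hF hG, energy_add_const hF' hG', energy_boostPullback hn hs hF hG,
    integral_boostPullback hn hF, integral_boostPullback hn hG, neg_neg] at hle
  exact le_of_mul_le_mul_left (le_of_add_le_add_left hle) hε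

end Conformal

section Moment

open scoped InnerProductSpace

theorem hasDerivAt_integral_of_continuous {X : Type*} [TopologicalSpace X] [CompactSpace X]
    [MeasurableSpace X] [BorelSpace X] {μ : Measure X} [IsFiniteMeasure μ] {f f' : ℝ → X → ℝ}
    (hf : ∀ t, Continuous (f t)) (hf' : Continuous (Function.uncurry f'))
    (h : ∀ t x, HasDerivAt (fun t => f t x) (f' t x) t) (t₀ : ℝ) :
    HasDerivAt (fun t => ∫ x, f t x ∂μ) (∫ x, f' t₀ x ∂μ) t₀ := by
  obtain ⟨C, hC⟩ := ((isCompact_closedBall t₀ 1).prod isCompact_univ).exists_bound_of_continuousOn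
    hf'.continuousOn
  exact (hasDerivAt_integral_of_dominated_loc_of_deriv_le (closedBall_mem_nhds t₀ one_pos)
    (.of_forall fun t => (hf t).aestronglyMeasurable)
    ((hf t₀).integrable_of_hasCompactSupport (.of_compactSpace _))
    (hf'.curry_right (x := t₀)).aestronglyMeasurable
    (ae_of_all _ fun x t ht => hC (t, x) ⟨ht, Set.mem_univ x⟩) (integrable_const C)
    (ae_of_all _ fun x t _ => h t x)).2

variable {E : Type*} [NormedAddCommGroup E] [InnerProductSpace ℝ E] [FiniteDimensional ℝ E]
  [MeasurableSpace E] [BorelSpace E]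

local notation "𝕊" => sphere (0 : E) 1
local notation "σ" => Measure.toSphere (volume : Measure E)

theorem hasDerivAt_integral_mul_norm_boost_rpow {F : 𝕊 → ℝ} (hF : Continuous F) (e : 𝕊) (r : ℝ) :
    HasDerivAt (fun t => ∫ ξ, F ξ * ‖boost (e : E) t ξ‖ ^ r ∂σ)
      (r * ∫ ξ, F ξ * ⟪(e : E), ξ⟫_ℝ ∂σ) 0 := by
  have norm_eq (t : ℝ) (ξ : 𝕊) :
      ‖boost (e : E) t ξ‖ = Real.cosh t + Real.sinh t * ⟪(e : E), ξ⟫_ℝ := by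
    rw [norm_boost (norm_eq_of_mem_sphere e), norm_eq_of_mem_sphere, mul_one]
  have hcont : Continuous fun z : ℝ × 𝕊 => ‖boost (e : E) z.1 z.2‖ ^ (r - 1) := by
    refine Continuous.rpow_const ?_ fun z => Or.inl (norm_boost_pos e z.2 z.1).ne'
    simp only [norm_eq]
    fun_prop
  have h := hasDerivAt_integral_of_continuous (μ := σ)
    (f := fun t ξ => F ξ * ‖boost (e : E) t ξ‖ ^ r)
    (f' := fun t ξ => F ξ * ((Real.sinh t + Real.cosh t * ⟪(e : E), ξ⟫_ℝ) * r *
      ‖boost (e : E) t ξ‖ ^ (r - 1)))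
    (fun t => hF.mul (continuous_norm_boost_rpow e t r)) (by unfold Function.uncurry; fun_prop)
    (fun t ξ => by
      refine HasDerivAt.const_mul _ (HasDerivAt.rpow_const ?_ (Or.inl (norm_boost_pos e ξ t).ne'))
      simp only [norm_eq]
      exact (Real.hasDerivAt_cosh t).add ((Real.hasDerivAt_sinh t).mul_const _)) 0
  convert! h using 1
  rw [← integral_const_mul]
  refine integral_congr_ae (ae_of_all _ fun ξ => ?_)
  simp only [norm_eq, Real.cosh_zero, Real.sinh_zero, zero_mul, add_zero, Real.one_rpow]
  ring

theorem IsExtremalPair.moment_eq_zero {n : ℕ} (hn : Module.finrank ℝ E = n + 1) {s : ℝ}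
    {hs : 0 < s} {ε m p : ℝ} (hε : 0 < ε) (hp : p * (n + s / 2) = n) {F G : 𝕊 → ℝ}
    (h : IsExtremalPair σ (distKernel 𝕊 hs + .const _ ε) p m F G) (e : 𝕊) :
    (∫ ξ, F ξ * ⟪(e : E), ξ⟫_ℝ ∂σ) * (∫ ξ, G ξ ∂σ) +
      (∫ ξ, F ξ ∂σ) * (∫ ξ, G ξ * ⟪(e : E), ξ⟫_ℝ ∂σ) = 0 := by
  have hderiv := (hasDerivAt_integral_mul_norm_boost_rpow h.continuous_left e (s / 2)).mul
    (hasDerivAt_integral_mul_norm_boost_rpow h.continuous_right e (s / 2))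
  have norm_boost_zero (ξ : 𝕊) : ‖boost (e : E) 0 ξ‖ = 1 := by simp [boost]
  have hmin : IsLocalMin ((fun t => ∫ ξ, F ξ * ‖boost (e : E) t ξ‖ ^ (s / 2) ∂σ) *
      fun t => ∫ ξ, G ξ * ‖boost (e : E) t ξ‖ ^ (s / 2) ∂σ) 0 :=
    .of_forall fun t => by
      simpa [norm_boost_zero] using h.integral_mul_integral_le hn hε hp e t
  have h₀ := hmin.hasDerivAt_eq_zero hderiv
  simp only [norm_boost_zero, Real.one_rpow, mul_one] at h₀
  refine (mul_eq_zero.1 (?_ : s / 2 * _ = 0)).resolve_left (half_pos hs).ne'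
  linear_combination h₀

end Moment

section Polarization

/-- The polarization (two-point symmetrization) of `F` with respect to the reflection `τ`: of the
two values at `x` and `τ x`, the larger one is put on the side `0 ≤ h`. -/
noncomputable def polarization {X : Type*} (τ : X → X) (h F : X → ℝ) (x : X) : ℝ :=
  if 0 ≤ h x then max (F x) (F (τ x)) else min (F x) (F (τ x))

/-- The map `τ` behaves like the reflection in the hyperplane `h = 0`, for a measure `μ` and a
kernel `K` which, like a power of the distance, is larger between points on different sides. -/
structure IsReflection {X : Type*} [TopologicalSpace X] [MeasurableSpace X] (μ : Measure X)
    (K : C(X × X, ℝ)) (τ : X → X) (h : X → ℝ) : Prop where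
  continuous : Continuous τ
  continuous_height : Continuous h
  involutive : Function.Involutive τ
  measurePreserving : MeasurePreserving τ μ μ
  height_apply (x : X) : h (τ x) = -h x
  apply_eq_self {x : X} : h x = 0 → τ x = x
  kernel_apply_apply (x y : X) : K (τ x, τ y) = K (x, y)
  kernel_lt {x y : X} : 0 < h x * h y → K (x, y) < K (x, τ y)

theorem integral_add_comp {X : Type*} [MeasurableSpace X] {μ : Measure X} {φ : X → X}
    (hφ : MeasurePreserving φ μ μ) {u : X → ℝ} (hu : Integrable u μ) :
    ∫ x, (u x + u (φ x)) ∂μ = 2 * ∫ x, u x ∂μ := by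
  have hu' : AEStronglyMeasurable u (μ.map φ) := by
    rw [hφ.map_eq]
    exact hu.aestronglyMeasurable
  have hcomp : ∫ x, u (φ x) ∂μ = ∫ x, u x ∂μ := by
    rw [← integral_map hφ.aemeasurable hu', hφ.map_eq]
  refine (integral_add hu (hφ.integrable_comp_of_integrable hu)).trans ?_
  rw [Function.comp_def, hcomp, two_mul]

theorem eq_zero_or_eq_zero_of_forall_mul_nonneg {X : Type*} [TopologicalSpace X] [CompactSpace X]
    [MeasurableSpace X] [BorelSpace X] {μ : Measure X} [IsFiniteMeasure μ] [μ.IsOpenPosMeasure]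
    {u v : X → ℝ} (hu : Continuous u) (huv : ∀ x y, 0 ≤ u x * v y) {a b : ℝ}
    (ha : 0 ≤ a) (hb : 0 < b) (hab : (∫ x, u x ∂μ) * b + a * ∫ x, v x ∂μ = 0) : u = 0 ∨ v = 0 := by
  have hprod : 0 ≤ (∫ x, u x ∂μ) * ∫ y, v y ∂μ := by
    rw [← integral_const_mul]
    refine integral_nonneg fun y => ?_
    rw [← integral_mul_const]
    exact integral_nonneg fun x => huv x y
  have hu₀ : ∫ x, u x ∂μ = 0 := by
    have hsq : (∫ x, u x ∂μ) ^ 2 * b + a * ((∫ x, u x ∂μ) * ∫ y, v y ∂μ) = 0 := by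
      linear_combination (∫ x, u x ∂μ) * hab
    have h : (∫ x, u x ∂μ) ^ 2 * b = 0 :=
      ((add_eq_zero_iff_of_nonneg (by positivity) (by positivity)).1 hsq).1
    simpa [hb.ne'] using h
  rw [or_iff_not_imp_right]
  intro hv₀
  obtain ⟨y, hy⟩ := Function.ne_iff.1 hv₀
  have hcont : Continuous fun x => u x * v y := hu.mul_const _
  have hint : ∫ x, u x * v y ∂μ = 0 := by rw [integral_mul_const, hu₀, zero_mul]
  rw [integral_eq_zero_iff_of_nonneg (fun x => huv x y)
    (hcont.integrable_of_hasCompactSupport (.of_compactSpace _)),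
    hcont.ae_eq_iff_eq _ continuous_zero] at hint
  exact funext fun x => (mul_eq_zero.1 (congrFun hint x)).resolve_right hy

variable {X : Type*} [TopologicalSpace X] [MeasurableSpace X] {μ : Measure X} {K : C(X × X, ℝ)}
  {τ : X → X} {h F G : X → ℝ}

/-- Eight times the integrand `F x * G y * K (x, y)` of the energy, averaged over `τ` in either
variable and written so as to separate the parts of `F` and `G` that are even and odd under `τ`:
polarization affects the odd ones only. -/
noncomputable def energyDensity (K : C(X × X, ℝ)) (τ : X → X) (F G : X → ℝ) (z : X × X) : ℝ :=
  (F z.1 + F (τ z.1)) * (G z.2 + G (τ z.2)) * (K z + K (z.1, τ z.2)) +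
    (F z.1 - F (τ z.1)) * (G z.2 - G (τ z.2)) * (K z - K (z.1, τ z.2))

namespace IsReflection

theorem polarization_eq (hτ : IsReflection μ K τ h) (F : X → ℝ) (x : X) :
    (0 ≤ h x ∧ polarization τ h F x = max (F x) (F (τ x)) ∧
      polarization τ h F (τ x) = min (F x) (F (τ x))) ∨
    (h x ≤ 0 ∧ polarization τ h F x = min (F x) (F (τ x)) ∧
      polarization τ h F (τ x) = max (F x) (F (τ x))) := by
  rcases lt_trichotomy (h x) 0 with hx | hx | hx
  · exact Or.inr ⟨hx.le, by simp [polarization, hx.not_ge],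
      by simp [polarization, hτ.height_apply, hτ.involutive x, hx.le, max_comm]⟩
  · exact Or.inl ⟨hx.ge, by simp [polarization, hτ.apply_eq_self hx]⟩
  · exact Or.inl ⟨hx.le, by simp [polarization, hx.le],
      by simp [polarization, hτ.height_apply, hτ.involutive x, hx.not_ge, min_comm]⟩

theorem polarization_add (hτ : IsReflection μ K τ h) (F : X → ℝ) (x : X) :
    polarization τ h F x + polarization τ h F (τ x) = F x + F (τ x) := by
  rcases hτ.polarization_eq F x with ⟨-, h₁, h₂⟩ | ⟨-, h₁, h₂⟩ <;> rw [h₁, h₂]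
  exacts [max_add_min _ _, min_add_max _ _]

theorem polarization_rpow_add (hτ : IsReflection μ K τ h) (F : X → ℝ) (x : X) (r : ℝ) :
    polarization τ h F x ^ r + polarization τ h F (τ x) ^ r = F x ^ r + F (τ x) ^ r := by
  rcases hτ.polarization_eq F x with ⟨-, h₁, h₂⟩ | ⟨-, h₁, h₂⟩ <;> rw [h₁, h₂] <;>
    rcases le_total (F x) (F (τ x)) with hle | hle <;> simp [hle, add_comm]

theorem polarization_sub (hτ : IsReflection μ K τ h) (F : X → ℝ) (x : X) :
    polarization τ h F x - polarization τ h F (τ x) = Real.sign (h x) * |F x - F (τ x)| := by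
  rcases eq_or_ne (h x) 0 with hx | hx
  · simp [hx, hτ.apply_eq_self hx]
  rcases hτ.polarization_eq F x with ⟨hx', h₁, h₂⟩ | ⟨hx', h₁, h₂⟩ <;> rw [h₁, h₂]
  · rw [Real.sign_of_pos (hx'.lt_of_ne' hx), one_mul, max_sub_min_eq_abs']
  · rw [Real.sign_of_neg (hx'.lt_of_ne hx), neg_one_mul, ← neg_sub, max_sub_min_eq_abs']

theorem kernel_apply_left (hτ : IsReflection μ K τ h) (x y : X) : K (τ x, y) = K (x, τ y) := by
  rw [← hτ.kernel_apply_apply, hτ.involutive]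

theorem kernel_sub_pos (hτ : IsReflection μ K τ h) {x y : X} (hxy : h x * h y < 0) :
    0 < K (x, y) - K (x, τ y) := by
  have hlt := hτ.kernel_lt (x := x) (y := τ y) (by rw [hτ.height_apply]; linarith)
  rwa [hτ.involutive, ← sub_pos] at hlt

theorem kernel_sub (hτ : IsReflection μ K τ h) (x y : X) :
    K (x, y) - K (x, τ y) = -(Real.sign (h x * h y) * |K (x, y) - K (x, τ y)|) := by
  rcases lt_trichotomy (h x * h y) 0 with hxy | hxy | hxy
  · rw [Real.sign_of_neg hxy, abs_of_pos (hτ.kernel_sub_pos hxy)]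
    ring
  · have heq : K (x, τ y) = K (x, y) := by
      rcases mul_eq_zero.1 hxy with hx | hy
      · rw [← hτ.kernel_apply_left, hτ.apply_eq_self hx]
      · rw [hτ.apply_eq_self hy]
    simp [heq]
  · rw [Real.sign_of_pos hxy, abs_of_neg (sub_neg.2 (hτ.kernel_lt hxy))]
    ring

theorem polarization_sub_mul_polarization_sub_mul_kernel_sub (hτ : IsReflection μ K τ h)
    (F G : X → ℝ) (x y : X) :
    (polarization τ h F x - polarization τ h F (τ x)) *
        (polarization τ h G y - polarization τ h G (τ y)) * (K (x, y) - K (x, τ y)) =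
      -|(F x - F (τ x)) * (G y - G (τ y)) * (K (x, y) - K (x, τ y))| := by
  rcases eq_or_ne (h x) 0 with hx | hx
  · simp [hτ.apply_eq_self hx, hτ.polarization_sub]
  rcases eq_or_ne (h y) 0 with hy | hy
  · simp [hτ.apply_eq_self hy]
  rw [hτ.polarization_sub, hτ.polarization_sub, hτ.kernel_sub, abs_mul, abs_mul, abs_neg, abs_mul,
    abs_abs]
  rcases hx.lt_or_gt with hx | hx <;> rcases hy.lt_or_gt with hy | hy <;>
    simp [Real.sign_of_pos, Real.sign_of_neg, hx, hy, mul_pos_of_neg_of_neg, mul_neg_of_pos_of_neg,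
      mul_neg_of_neg_of_pos]

theorem energyDensity_sub_energyDensity_polarization (hτ : IsReflection μ K τ h) (F G : X → ℝ)
    (z : X × X) :
    energyDensity K τ F G z - energyDensity K τ (polarization τ h F) (polarization τ h G) z =
      (F z.1 - F (τ z.1)) * (G z.2 - G (τ z.2)) * (K z - K (z.1, τ z.2)) +
        |(F z.1 - F (τ z.1)) * (G z.2 - G (τ z.2)) * (K z - K (z.1, τ z.2))| := by
  rw [energyDensity, energyDensity, hτ.polarization_sub_mul_polarization_sub_mul_kernel_sub,
    hτ.polarization_add, hτ.polarization_add]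
  ring

theorem energyDensity_eq (hτ : IsReflection μ K τ h) (F G : X → ℝ) (z : X × X) :
    energyDensity K τ F G z = 2 * (F z.1 * G z.2 * K z + F (τ z.1) * G z.2 * K (τ z.1, z.2) +
      (F z.1 * G (τ z.2) * K (z.1, τ z.2) + F (τ z.1) * G (τ z.2) * K (τ z.1, τ z.2))) := by
  rw [energyDensity, hτ.kernel_apply_apply, hτ.kernel_apply_left]
  ring

variable [BorelSpace X]

theorem isPinched_polarization (hτ : IsReflection μ K τ h) (hF : IsPinched F) :
    IsPinched (polarization τ h F) := by
  obtain ⟨hFm, a, ha, b, hb, hab⟩ := hF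
  have hm' : Measurable fun x => F (τ x) := hFm.comp hτ.continuous.measurable
  refine ⟨.ite (measurableSet_le measurable_const hτ.continuous_height.measurable) (hFm.max hm')
    (hFm.min hm'), a, ha, b, hb, fun x => ?_⟩
  unfold polarization
  split_ifs
  · exact ⟨le_max_of_le_left (hab x).1, max_le (hab x).2 (hab (τ x)).2⟩
  · exact ⟨le_min (hab x).1 (hab (τ x)).1, min_le_of_left_le (hab x).2⟩

theorem rpowNorm_polarization [IsFiniteMeasure μ] (hτ : IsReflection μ K τ h) (hF : IsPinched F)
    (r : ℝ) : rpowNorm μ r (polarization τ h F) = rpowNorm μ r F := by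
  have h₁ := integral_add_comp hτ.measurePreserving
    (((hτ.isPinched_polarization hF).rpow r).integrable μ)
  have h₂ := integral_add_comp hτ.measurePreserving ((hF.rpow r).integrable μ)
  simp only [hτ.polarization_rpow_add] at h₁
  rw [rpowNorm, rpowNorm, mul_left_cancel₀ two_ne_zero (h₁.symm.trans h₂)]

variable [CompactSpace X] [SecondCountableTopology X] [IsFiniteMeasure μ]

theorem integrable_energyDensity (hτ : IsReflection μ K τ h) (hF : IsPinched F)
    (hG : IsPinched G) : Integrable (energyDensity K τ F G) (μ.prod μ) := by
  have hleft := hτ.measurePreserving.prod (.id μ)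
  have hright := (MeasurePreserving.id μ).prod hτ.measurePreserving
  have hint := hF.integrable_mul_mul_kernel (μ := μ) hG K
  have hint' := hint.add (hleft.integrable_comp_of_integrable hint)
  rw [funext fun z => hτ.energyDensity_eq F G z]
  exact (hint'.add (hright.integrable_comp_of_integrable hint')).const_mul 2

theorem integral_energyDensity (hτ : IsReflection μ K τ h) (hF : IsPinched F)
    (hG : IsPinched G) : ∫ z, energyDensity K τ F G z ∂μ.prod μ = 8 * energy μ K F G := by
  have hleft := hτ.measurePreserving.prod (.id μ)
  have hright := (MeasurePreserving.id μ).prod hτ.measurePreserving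
  have hint := hF.integrable_mul_mul_kernel (μ := μ) hG K
  have h₁ := integral_add_comp hleft hint
  have h₂ := integral_add_comp hright (hint.add (hleft.integrable_comp_of_integrable hint))
  simp only [Pi.add_apply, Function.comp_apply, Prod.map, id] at h₁ h₂
  rw [h₁, ← energy_eq_integral_prod hF hG] at h₂
  simp only [hτ.energyDensity_eq]
  rw [integral_const_mul, h₂]
  ring

end IsReflection

theorem IsReflection.apply_eq_of_sub_mul_height_eq_zero (hτ : IsReflection μ K τ h)
    (hF : (fun x => (F x - F (τ x)) * h x) = 0) (x : X) : F (τ x) = F x := by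
  rcases mul_eq_zero.1 (congrFun hF x) with hx | hx
  · exact (sub_eq_zero.1 hx).symm
  · rw [hτ.apply_eq_self hx]

variable [CompactSpace X] [BorelSpace X] [IsFiniteMeasure μ]

theorem IsReflection.integral_sub_mul_height (hτ : IsReflection μ K τ h) (hF : Continuous F) :
    ∫ x, (F x - F (τ x)) * h x ∂μ = 2 * ∫ x, F x * h x ∂μ := by
  rw [← integral_add_comp hτ.measurePreserving (u := fun x => F x * h x)
    ((hF.mul hτ.continuous_height).integrable_of_hasCompactSupport (.of_compactSpace _))]
  refine integral_congr_ae (ae_of_all _ fun x => ?_)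
  simp only [hτ.height_apply]
  ring

theorem IsReflection.potential_apply (hτ : IsReflection μ K τ h) (hG : IsPinched G)
    (hGτ : ∀ x, G (τ x) = G x) (x : X) : potential μ K G (τ x) = potential μ K G x := by
  have hint := hG.integrable_kernel_mul (μ := μ) K
  have h₁ := integral_add_comp hτ.measurePreserving (hint x)
  have h₂ := integral_add_comp hτ.measurePreserving (hint (τ x))
  simp only [hGτ, hτ.kernel_apply_apply, hτ.kernel_apply_left] at h₁ h₂
  simp only [potential, hτ.kernel_apply_left]
  simp only [add_comm] at h₁ h₂
  linarith

variable [SecondCountableTopology X]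

theorem IsExtremalPair.mul_mul_kernel_sub_nonpos [μ.IsOpenPosMeasure] {m p : ℝ}
    (hFG : IsExtremalPair μ K p m F G) (hτ : IsReflection μ K τ h) (x y : X) :
    (F x - F (τ x)) * (G y - G (τ y)) * (K (x, y) - K (x, τ y)) ≤ 0 := by
  have hF := hFG.isPinched_left
  have hG := hFG.isPinched_right
  have hPF := hτ.isPinched_polarization hF
  have hPG := hτ.isPinched_polarization hG
  set D : X × X → ℝ := fun z =>
    (F z.1 - F (τ z.1)) * (G z.2 - G (τ z.2)) * (K z - K (z.1, τ z.2))
  have hDcont : Continuous D := by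
    have := hFG.continuous_left
    have := hFG.continuous_right
    have := hτ.continuous
    fun_prop
  have hsub : (fun z => energyDensity K τ F G z -
      energyDensity K τ (polarization τ h F) (polarization τ h G) z) = fun z => D z + |D z| :=
    funext (hτ.energyDensity_sub_energyDensity_polarization F G)
  have hint := (hτ.integrable_energyDensity hF hG).sub (hτ.integrable_energyDensity hPF hPG)
  have hnonpos : ∫ z, (D z + |D z|) ∂μ.prod μ ≤ 0 := by
    have hle := hFG.le_energy hPF hPG
    rw [hτ.rpowNorm_polarization hF, hτ.rpowNorm_polarization hG, ← hFG.energy_eq] at hle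
    rw [← hsub, integral_sub (hτ.integrable_energyDensity hF hG)
      (hτ.integrable_energyDensity hPF hPG), hτ.integral_energyDensity hF hG,
      hτ.integral_energyDensity hPF hPG]
    linarith
  have hnonneg (z : X × X) : 0 ≤ D z + |D z| := by linarith [neg_abs_le (D z)]
  have hzero := (integral_eq_zero_iff_of_nonneg hnonneg (hsub ▸ hint)).1
    (hnonpos.antisymm (integral_nonneg hnonneg))
  have h₀ : D (x, y) + |D (x, y)| = 0 :=
    congrFun ((hDcont.add hDcont.abs).ae_eq_iff_eq _ continuous_zero |>.1 hzero) (x, y)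
  change D (x, y) ≤ 0
  linarith [abs_nonneg (D (x, y))]

theorem IsExtremalPair.sub_mul_height_mul_nonneg [μ.IsOpenPosMeasure] {m p : ℝ}
    (hFG : IsExtremalPair μ K p m F G) (hτ : IsReflection μ K τ h) (x y : X) :
    0 ≤ (F x - F (τ x)) * h x * ((G y - G (τ y)) * h y) := by
  have hle := hFG.mul_mul_kernel_sub_nonpos hτ x y
  rw [mul_mul_mul_comm]
  rcases lt_trichotomy (h x * h y) 0 with hxy | hxy | hxy
  · exact mul_nonneg_of_nonpos_of_nonpos
      (nonpos_of_mul_nonpos_left hle (hτ.kernel_sub_pos hxy)) hxy.le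
  · rw [hxy, mul_zero]
  · exact mul_nonneg (nonneg_of_mul_nonpos_left hle (sub_neg.2 (hτ.kernel_lt hxy))) hxy.le

theorem IsExtremalPair.apply_eq_of_moment_eq_zero [NeZero μ] [μ.IsOpenPosMeasure] {m p : ℝ}
    (hFG : IsExtremalPair μ K p m F G) (hτ : IsReflection μ K τ h)
    (hmoment : (∫ x, F x * h x ∂μ) * (∫ x, G x ∂μ) + (∫ x, F x ∂μ) * (∫ x, G x * h x ∂μ) = 0)
    (x : X) : F (τ x) = F x := by
  have hcont : Continuous fun x => (F x - F (τ x)) * h x :=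
    (hFG.continuous_left.sub (hFG.continuous_left.comp hτ.continuous)).mul hτ.continuous_height
  rcases eq_zero_or_eq_zero_of_forall_mul_nonneg hcont (hFG.sub_mul_height_mul_nonneg hτ)
    (hFG.isPinched_left.integral_pos μ).le (hFG.isPinched_right.integral_pos μ) (by
      rw [hτ.integral_sub_mul_height hFG.continuous_left,
        hτ.integral_sub_mul_height hFG.continuous_right]
      linear_combination 2 * hmoment) with hF | hG
  · exact hτ.apply_eq_of_sub_mul_height_eq_zero hF x
  · rw [hFG.eulerLagrange, holderDual, holderDual,
      hτ.potential_apply hFG.isPinched_right (hτ.apply_eq_of_sub_mul_height_eq_zero hG)]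

end Polarization

section Reflection

open scoped InnerProductSpace

variable {E : Type*} [NormedAddCommGroup E] [InnerProductSpace ℝ E]

local notation "𝕊" => sphere (0 : E) 1
local notation "σ" => Measure.toSphere (volume : Measure E)

/-- The action of a linear isometry on the unit sphere. -/
def sphereIsometry (L : E ≃ₗᵢ[ℝ] E) (ξ : 𝕊) : 𝕊 :=
  ⟨L ξ, by simp⟩

theorem continuous_sphereIsometry (L : E ≃ₗᵢ[ℝ] E) : Continuous (sphereIsometry L) :=
  .subtype_mk (L.continuous.comp continuous_subtype_val) _

open scoped Pointwise in
theorem Ioo_smul_image_sphereIsometry_preimage (L : E ≃ₗᵢ[ℝ] E) (s : Set 𝕊) :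
    Set.Ioo (0 : ℝ) 1 • ((↑) '' (sphereIsometry L ⁻¹' s) : Set E) =
      L ⁻¹' (Set.Ioo (0 : ℝ) 1 • ((↑) '' s)) := by
  ext x
  simp only [Set.mem_smul, Set.mem_image, Set.mem_preimage]
  constructor
  · rintro ⟨r, hr, _, ⟨ξ, hξ, rfl⟩, rfl⟩
    exact ⟨r, hr, _, ⟨_, hξ, rfl⟩, (L.map_smul r _).symm⟩
  · rintro ⟨r, hr, _, ⟨ξ, hξ, rfl⟩, hx⟩
    have hξ' : sphereIsometry L (sphereIsometry L.symm ξ) = ξ :=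
      Subtype.ext (L.apply_symm_apply ξ)
    refine ⟨r, hr, _, ⟨sphereIsometry L.symm ξ, hξ'.symm ▸ hξ, rfl⟩, L.injective ?_⟩
    rw [← hx, L.map_smul]
    exact congrArg (r • Subtype.val ·) hξ'

theorem measurePreserving_sphereIsometry [FiniteDimensional ℝ E] [MeasurableSpace E] [BorelSpace E]
    (L : E ≃ₗᵢ[ℝ] E) : MeasurePreserving (sphereIsometry L) σ σ := by
  have hL := (continuous_sphereIsometry L).measurable
  refine ⟨hL, Measure.ext fun s hs => ?_⟩
  rw [Measure.map_apply hL hs, Measure.toSphere_apply' _ (hL hs), Measure.toSphere_apply' _ hs,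
    Ioo_smul_image_sphereIsometry_preimage]
  congr 1
  exact L.measurePreserving.measure_preimage_equiv (f := L.toHomeomorph.toMeasurableEquiv) _

/-- The reflection of the sphere in the hyperplane orthogonal to `e`. -/
noncomputable def sphereReflection (e : 𝕊) : 𝕊 → 𝕊 :=
  sphereIsometry (ℝ ∙ (e : E))ᗮ.reflection

theorem coe_sphereReflection (e ξ : 𝕊) :
    (sphereReflection e ξ : E) = ξ - (2 * ⟪(e : E), ξ⟫_ℝ) • (e : E) := by
  change (ℝ ∙ (e : E))ᗮ.reflection ξ = _
  rw [Submodule.reflection_orthogonal_apply,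
    Submodule.reflection_singleton_apply, norm_eq_of_mem_sphere]
  simp [mul_smul, two_smul]

theorem exists_sphereReflection_eq {ξ η : 𝕊} (h : ξ ≠ η) : ∃ e, sphereReflection e ξ = η := by
  have hne : (ξ : E) - η ≠ 0 := sub_ne_zero.2 (Subtype.coe_injective.ne h)
  refine ⟨⟨NormedSpace.normalize ((ξ : E) - η),
    mem_sphere_zero_iff_norm.2 (NormedSpace.norm_normalize hne)⟩, Subtype.ext ?_⟩
  have hspan : (ℝ ∙ NormedSpace.normalize ((ξ : E) - η)) = ℝ ∙ ((ξ : E) - η) :=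
    Submodule.span_singleton_smul_eq (isUnit_iff_ne_zero.2 (inv_ne_zero (norm_ne_zero_iff.2 hne))) _
  simp only [sphereReflection, sphereIsometry, hspan]
  exact Submodule.reflection_sub (by simp)

theorem dist_sphereReflection_sq (e ξ η : 𝕊) :
    dist ξ (sphereReflection e η) ^ 2 = dist ξ η ^ 2 + 4 * (⟪(e : E), ξ⟫_ℝ * ⟪(e : E), η⟫_ℝ) := by
  rw [Subtype.dist_eq, Subtype.dist_eq, dist_eq_norm, dist_eq_norm, norm_sub_sq_real,
    norm_sub_sq_real]
  simp only [norm_eq_of_mem_sphere]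
  rw [coe_sphereReflection, inner_sub_right, inner_smul_right, real_inner_comm (e : E)]
  ring

variable [FiniteDimensional ℝ E] [MeasurableSpace E] [BorelSpace E]

theorem isReflection_sphereReflection {s : ℝ} (hs : 0 < s) (ε : ℝ) (e : 𝕊) :
    IsReflection σ (distKernel 𝕊 hs + .const _ ε) (sphereReflection e)
      fun ξ => ⟪(e : E), ξ⟫_ℝ where
  continuous := continuous_sphereIsometry _
  continuous_height := by fun_prop
  involutive ξ := Subtype.ext ((ℝ ∙ (e : E))ᗮ.reflection_reflection ξ)
  measurePreserving := measurePreserving_sphereIsometry _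
  height_apply ξ := by
    rw [coe_sphereReflection, inner_sub_right, inner_smul_right, real_inner_self_eq_norm_sq,
      norm_eq_of_mem_sphere]
    ring
  apply_eq_self {ξ} h :=
    Subtype.ext (by rw [coe_sphereReflection, h, mul_zero, zero_smul, sub_zero])
  kernel_apply_apply ξ η := by
    have h : dist (sphereReflection e ξ) (sphereReflection e η) = dist ξ η :=
      (ℝ ∙ (e : E))ᗮ.reflection.dist_map ξ η
    simp only [ContinuousMap.add_apply, distKernel_apply, h, ContinuousMap.const_apply]
  kernel_lt {ξ η} h := by
    have hdist : dist ξ η < dist ξ (sphereReflection e η) :=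
      lt_of_pow_lt_pow_left₀ 2 dist_nonneg (by linarith [dist_sphereReflection_sq e ξ η])
    exact add_lt_add_left (Real.rpow_lt_rpow dist_nonneg hdist hs) ε

theorem IsExtremalPair.apply_eq_apply {n : ℕ} (hn : Module.finrank ℝ E = n + 1) {s : ℝ}
    {hs : 0 < s} {ε m p : ℝ} (hε : 0 < ε) (hp : p * (n + s / 2) = n) {F G : 𝕊 → ℝ}
    (h : IsExtremalPair σ (distKernel 𝕊 hs + .const _ ε) p m F G) (ξ η : 𝕊) : F ξ = F η := by
  have : Nontrivial E := Module.nontrivial_of_finrank_eq_succ hn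
  have : NeZero σ := ⟨Measure.toSphere_ne_zero _⟩
  rcases eq_or_ne η ξ with rfl | hne
  · rfl
  · obtain ⟨e, rfl⟩ := exists_sphereReflection_eq hne
    exact h.apply_eq_of_moment_eq_zero (isReflection_sphereReflection hs ε e)
      (h.moment_eq_zero hn hε hp e) η

end Reflection

section SharpConstant

variable {X : Type*} [TopologicalSpace X] [MeasurableSpace X] {μ : Measure X} [IsFiniteMeasure μ]
  [NeZero μ] {K : C(X × X, ℝ)} {p : ℝ}

theorem mul_rpowNorm_le_rpowNorm_potential {C : ℝ} (hp : p ∈ Set.Ioo 0 1)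
    (h : ∀ ⦃F G : X → ℝ⦄, IsPinched F → IsPinched G →
      C * (rpowNorm μ p F * rpowNorm μ p G) ≤ energy μ K F G)
    {F : X → ℝ} (hF : IsPinched F) (hKF : IsPinched (potential μ K F)) :
    C * rpowNorm μ p F ≤ rpowNorm μ p.conjExponent (potential μ K F) := by
  have hdual := hKF.holderDual p
  refine le_of_mul_le_mul_left ?_ (rpowNorm_pos (μ := μ) hdual p)
  calc rpowNorm μ p (holderDual p (potential μ K F)) * (C * rpowNorm μ p F)
      = C * (rpowNorm μ p (holderDual p (potential μ K F)) * rpowNorm μ p F) := mul_left_comm ..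
    _ ≤ energy μ K (holderDual p (potential μ K F)) F := h hdual hF
    _ = _ := integral_holderDual_mul hp hKF

variable [CompactSpace X] [SecondCountableTopology X] [BorelSpace X]

theorem IsExtremalPair.mul_rpow_le_of_forall_eq {A c m : ℝ} {F G : X → ℝ} (hp : p ∈ Set.Ioo 0 1)
    (hFG : IsExtremalPair μ K p m F G) (hsymm : ∀ x y, K (x, y) = K (y, x))
    (hA0 : 0 ≤ A) (hA : ∀ x, A ≤ ∫ y, K (x, y) ∂μ) (hF : ∀ x, F x = c) :
    A * μ.real Set.univ ^ (1 / p.conjExponent - 1 / p) ≤ m := by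
  obtain ⟨x₀⟩ : Nonempty X := μ.nonempty_of_neZero
  obtain rfl : F = fun _ => c := funext hF
  have hc : 0 < c := hFG.pos_left x₀
  have hG := hFG.isPinched_right
  have hS : 0 < μ.real Set.univ := measureReal_univ_pos
  have hGnorm := rpowNorm_pos (μ := μ) hG p
  have holder := rpowNorm_mul_rpowNorm_le_integral_mul (μ := μ) hp hG (.const one_pos)
  rw [rpowNorm_const zero_le_one (conjExponent_ne_zero hp)] at holder
  simp only [one_mul, mul_one] at holder
  have hle : A * c * ∫ x, G x ∂μ ≤ m * (rpowNorm μ p (fun _ : X => c) * rpowNorm μ p G) := by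
    rw [← hFG.energy_eq, energy_comm hsymm hFG.isPinched_left hG, energy, ← integral_const_mul]
    refine integral_mono ((hG.integrable μ).const_mul _) ?_ fun x => ?_
    · simpa only [mul_comm, ContinuousMap.coe_mk] using
        hG.integrable_continuous_mul ⟨_, continuous_potential hFG.isPinched_left⟩
    · simp only [potential, integral_mul_const]
      rw [mul_comm (G x)]
      gcongr
      exacts [(hG.pos x).le, hA x]
  rw [rpowNorm_const hc.le hp.1.ne'] at hle
  rw [Real.rpow_sub hS, mul_div_assoc', div_le_iff₀ (by positivity)]
  refine le_of_mul_le_mul_left ?_ (mul_pos hc hGnorm)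
  calc c * rpowNorm μ p G * (A * μ.real Set.univ ^ (1 / p.conjExponent))
      = A * c * (rpowNorm μ p G * μ.real Set.univ ^ (1 / p.conjExponent)) := by ring
    _ ≤ A * c * ∫ x, G x ∂μ := by gcongr
    _ ≤ c * rpowNorm μ p G * (m * μ.real Set.univ ^ (1 / p)) := hle.trans_eq (by ring)

end SharpConstant

section PinchedHLS

variable {E : Type*} [NormedAddCommGroup E] [InnerProductSpace ℝ E] [FiniteDimensional ℝ E]
  [MeasurableSpace E] [BorelSpace E]

local notation "𝕊" => sphere (0 : E) 1
local notation "σ" => Measure.toSphere (volume : Measure E)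

theorem mul_rpowNorm_mul_rpowNorm_le_energy {n : ℕ} (hn : Module.finrank ℝ E = n + 1) {s p A : ℝ}
    (hs : 0 < s) (hp : p ∈ Set.Ioo 0 1) (hps : p * (n + s / 2) = n) (hA0 : 0 ≤ A)
    (hA : ∀ ξ : 𝕊, A ≤ ∫ η, dist ξ η ^ s ∂σ) {F G : 𝕊 → ℝ} (hF : IsPinched F) (hG : IsPinched G) :
    A * Measure.real σ Set.univ ^ (1 / p.conjExponent - 1 / p) * (rpowNorm σ p F * rpowNorm σ p G) ≤
      energy σ (distKernel 𝕊 hs) F G := by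
  have : Nontrivial E := Module.nontrivial_of_finrank_eq_succ hn
  have : NeZero σ := ⟨Measure.toSphere_ne_zero _⟩
  obtain ⟨ξ₀⟩ : Nonempty 𝕊 := (Measure.toSphere (volume : Measure E)).nonempty_of_neZero
  have regularized {ε : ℝ} (hε : 0 < ε) :
      A * Measure.real σ Set.univ ^ (1 / p.conjExponent - 1 / p) *
        (rpowNorm σ p F * rpowNorm σ p G) ≤
          energy σ (distKernel 𝕊 hs) F G + ε * ((∫ ξ, F ξ ∂σ) * ∫ ξ, G ξ ∂σ) := by
    set K : C(𝕊 × 𝕊, ℝ) := distKernel 𝕊 hs + .const _ ε with hK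
    have hKle (ξ η : 𝕊) : dist ξ η ^ s ≤ K (ξ, η) := le_add_of_nonneg_right hε.le
    have hsymm (ξ η : 𝕊) : K (ξ, η) = K (η, ξ) := by
      simp only [hK, ContinuousMap.add_apply, distKernel_apply, dist_comm,
        ContinuousMap.const_apply]
    obtain ⟨m, F₀, G₀, hFG⟩ := exists_isExtremalPair (μ := σ) hp
      (fun z : 𝕊 × 𝕊 => add_pos_of_nonneg_of_pos (Real.rpow_nonneg dist_nonneg s) hε) hsymm
    have hm := hFG.mul_rpow_le_of_forall_eq hp hsymm hA0 (fun ξ => (hA ξ).trans <|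
      integral_mono (((distKernel 𝕊 hs).curry ξ).continuous.integrable_of_hasCompactSupport
        (.of_compactSpace _)) ((K.curry ξ).continuous.integrable_of_hasCompactSupport
        (.of_compactSpace _)) (hKle ξ)) fun ξ => hFG.apply_eq_apply hn hε hps ξ ξ₀
    rw [← energy_add_const hF hG]
    exact (mul_le_mul_of_nonneg_right hm
      (mul_pos (rpowNorm_pos hF p) (rpowNorm_pos hG p)).le).trans (hFG.le_energy hF hG)
  refine le_of_forall_pos_le_add fun δ hδ => ?_
  have hFG := mul_pos (hF.integral_pos σ) (hG.integral_pos σ)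
  simpa only [div_mul_cancel₀ _ hFG.ne'] using regularized (div_pos hδ hFG)

end PinchedHLS

section Shear

open scoped InnerProductSpace

variable {E : Type*} [NormedAddCommGroup E] [InnerProductSpace ℝ E] {e : E}

/-- The shear `x ↦ x + ‖x‖ • e`. For a unit vector `e` it carries the complement of the ray spanned
by `-e` diffeomorphically onto the open half-space `0 < ⟪e, ·⟫`, and functions of `‖x‖ + ⟪e, x⟫`
and `‖x‖` into functions of `⟪e, y⟫` and `‖y‖`. -/
noncomputable def normShear (e x : E) : E :=
  x + ‖x‖ • e

theorem inner_normShear (he : ‖e‖ = 1) (x : E) : ⟪e, normShear e x⟫_ℝ = ‖x‖ + ⟪e, x⟫_ℝ := by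
  rw [normShear, inner_add_right, inner_smul_right, real_inner_self_eq_norm_sq, he]
  ring

theorem norm_add_inner_nonneg (he : ‖e‖ = 1) (x : E) : 0 ≤ ‖x‖ + ⟪e, x⟫_ℝ := by
  linarith [neg_abs_le ⟪e, x⟫_ℝ, abs_inner_le_norm he x]

theorem norm_normShear_sq (he : ‖e‖ = 1) (x : E) :
    ‖normShear e x‖ ^ 2 = 2 * ‖x‖ * (‖x‖ + ⟪e, x⟫_ℝ) := by
  rw [normShear, norm_add_sq_real, inner_smul_right, norm_smul, he, norm_norm, real_inner_comm]
  ring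

theorem bijOn_normShear (he : ‖e‖ = 1) :
    Set.BijOn (normShear e) {x | 0 < ‖x‖ + ⟪e, x⟫_ℝ} {y | 0 < ⟪e, y⟫_ℝ} := by
  have hnorm {y : E} (hy : 0 < ⟪e, y⟫_ℝ) :
      ‖y - (‖y‖ ^ 2 / (2 * ⟪e, y⟫_ℝ)) • e‖ = ‖y‖ ^ 2 / (2 * ⟪e, y⟫_ℝ) := by
    rw [← sq_eq_sq₀ (norm_nonneg _) (by positivity), norm_sub_sq_real, norm_smul, inner_smul_right,
      he, real_inner_comm e y, mul_one, Real.norm_eq_abs, sq_abs]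
    field_simp
    ring
  refine Set.InvOn.bijOn (f' := fun y => y - (‖y‖ ^ 2 / (2 * ⟪e, y⟫_ℝ)) • e)
    ⟨fun x hx => ?_, fun y hy => ?_⟩ (fun x hx => ?_) fun y hy => ?_ <;>
    rw [Set.mem_ofPred_eq] at *
  · beta_reduce
    rw [inner_normShear he, norm_normShear_sq he, mul_right_comm, mul_div_cancel_left₀]
    · exact add_sub_cancel_right x _
    · positivity
  · rw [normShear, hnorm hy, sub_add_cancel]
  · rwa [inner_normShear he]
  · rw [hnorm hy, inner_sub_right, inner_smul_right,
      real_inner_self_eq_norm_sq, he]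
    linarith

theorem hasFDerivAt_normShear (e : E) {x : E} (hx : x ≠ 0) :
    HasFDerivAt (normShear e) (.id ℝ E + (‖x‖⁻¹ • innerSL ℝ x).smulRight e) x :=
  (hasFDerivAt_id x).add ((hasFDerivAt_norm hx).smul_const e)

theorem setLIntegral_inner_pos_eq_lintegral_normShear [FiniteDimensional ℝ E] [MeasurableSpace E]
    [BorelSpace E] (he : ‖e‖ = 1) (g : E → ℝ≥0∞) :
    ∫⁻ y in {y | 0 < ⟪e, y⟫_ℝ}, g y =
      ∫⁻ x, ENNReal.ofReal ((‖x‖ + ⟪e, x⟫_ℝ) / ‖x‖) * g (normShear e x) := by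
  have hs : MeasurableSet {x : E | 0 < ‖x‖ + ⟪e, x⟫_ℝ} :=
    measurableSet_lt (by fun_prop) (by fun_prop)
  have hne {x : E} (hx : x ∈ {x : E | 0 < ‖x‖ + ⟪e, x⟫_ℝ}) : x ≠ 0 := by
    rintro rfl
    simp at hx
  rw [← (bijOn_normShear he).image_eq, lintegral_image_eq_lintegral_abs_det_fderiv_mul volume hs
    (fun x hx => (hasFDerivAt_normShear e (hne hx)).hasFDerivWithinAt) (bijOn_normShear he).injOn,
    ← setLIntegral_eq_of_support_subset (s := {x : E | 0 < ‖x‖ + ⟪e, x⟫_ℝ}) (f := fun x =>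
      ENNReal.ofReal ((‖x‖ + ⟪e, x⟫_ℝ) / ‖x‖) * g (normShear e x))]
  · refine setLIntegral_congr_fun hs fun x hx => ?_
    have hx0 : 0 < ‖x‖ := norm_pos_iff.2 (hne hx)
    have hdet : (.id ℝ E + (‖x‖⁻¹ • innerSL ℝ x).smulRight e : E →L[ℝ] E).det =
        (‖x‖ + ⟪e, x⟫_ℝ) / ‖x‖ := by
      rw [det_id_add_smulRight, smul_apply, innerSL_apply_apply,
        real_inner_comm, smul_eq_mul]
      field_simp
    rw [hdet, abs_of_pos (div_pos hx hx0)]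
  · refine fun x hx => pos_of_mul_pos_left ?_ (inv_nonneg.2 (norm_nonneg x))
    exact ENNReal.ofReal_pos.1 (pos_iff_ne_zero.2 (left_ne_zero_of_mul hx))

end Shear

section SphereMoment

open scoped InnerProductSpace

theorem lintegral_volumeIoiPow (n : ℕ) {h : ℝ → ℝ≥0∞} (hh : Measurable h) :
    ∫⁻ r : Set.Ioi (0 : ℝ), h r ∂(Measure.volumeIoiPow n) =
      ∫⁻ r in Set.Ioi (0 : ℝ), ENNReal.ofReal (r ^ n) * h r := by
  rw [Measure.volumeIoiPow, lintegral_withDensity_eq_lintegral_mul _ (by fun_prop)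
    (by fun_prop : Measurable fun r : Set.Ioi (0 : ℝ) => h r)]
  exact lintegral_subtype_comap measurableSet_Ioi (fun r => ENNReal.ofReal (r ^ n) * h r)

theorem lintegral_rpow_mul_exp_neg_mul_Ioi {a r : ℝ} (ha : 0 < a) (hr : 0 < r) :
    ∫⁻ t in Set.Ioi (0 : ℝ), ENNReal.ofReal (t ^ (a - 1) * Real.exp (-(r * t))) =
      ENNReal.ofReal ((1 / r) ^ a * Real.Gamma a) := by
  have := Real.Gamma_pos_of_pos ha
  have h := Real.integral_rpow_mul_exp_neg_mul_Ioi ha hr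
  rw [← h, ofReal_integral_eq_lintegral_ofReal (.of_integral_ne_zero (by rw [h]; positivity))]
  filter_upwards [ae_restrict_mem measurableSet_Ioi] with t (ht : 0 < t)
  simp only [Pi.zero_apply]
  positivity

variable {E : Type*} [NormedAddCommGroup E] [InnerProductSpace ℝ E] [FiniteDimensional ℝ E]
  [MeasurableSpace E] [BorelSpace E]

theorem lintegral_rexp_neg_mul_sq_norm {b : ℝ} (hb : 0 < b) :
    ∫⁻ z : E, ENNReal.ofReal (Real.exp (-b * ‖z‖ ^ 2)) =
      ENNReal.ofReal ((Real.pi / b) ^ (Module.finrank ℝ E / 2 : ℝ)) := by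
  have h := GaussianFourier.integral_rexp_neg_mul_sq_norm (V := E) hb
  rw [← h, ofReal_integral_eq_lintegral_ofReal (.of_integral_ne_zero (by rw [h]; positivity))]
  exact ae_of_all _ fun z => (Real.exp_pos _).le

theorem lintegral_eq_lintegral_lintegral_orthogonal_span_singleton {e : E} (he : ‖e‖ = 1)
    {g : E → ℝ≥0∞} (hg : Measurable g) :
    ∫⁻ y, g y = ∫⁻ u : ℝ, ∫⁻ z : (ℝ ∙ e)ᗮ, g (u • e + z) := by
  have hspan := (LinearIsometryEquiv.toSpanUnitSingleton (𝕜 := ℝ) e he).measurePreserving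
  have h := ((ℝ ∙ e).orthogonalDecomposition.symm.measurePreserving.comp
    (WithLp.volume_preserving_toLp _ _)).comp (hspan.prod (.id (volume : Measure (ℝ ∙ e)ᗮ)))
  rw [← h.lintegral_comp hg, lintegral_prod _ (by fun_prop)]
  simp

theorem lintegral_rpow_mul_exp_neg_add_sq_norm_div {s u : ℝ} (hu : 0 < u) :
    ∫⁻ z : E, ENNReal.ofReal (u ^ (s - 1) * Real.exp (-((u ^ 2 + ‖z‖ ^ 2) / u))) =
      ENNReal.ofReal (Real.pi ^ (Module.finrank ℝ E / 2 : ℝ) *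
        (u ^ (s + Module.finrank ℝ E / 2 - 1) * Real.exp (-(1 * u)))) := by
  have h (z : E) : u ^ (s - 1) * Real.exp (-((u ^ 2 + ‖z‖ ^ 2) / u)) =
      u ^ (s - 1) * Real.exp (-u) * Real.exp (-u⁻¹ * ‖z‖ ^ 2) := by
    rw [mul_assoc, ← Real.exp_add]
    congr 2
    field_simp
    ring
  simp only [h, ENNReal.ofReal_mul (show 0 ≤ u ^ (s - 1) * Real.exp (-u) by positivity)]
  rw [lintegral_const_mul _ (by fun_prop), lintegral_rexp_neg_mul_sq_norm (inv_pos.2 hu),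
    ← ENNReal.ofReal_mul (by positivity), div_inv_eq_mul, Real.mul_rpow Real.pi_pos.le hu.le,
    add_sub_right_comm, Real.rpow_add hu, one_mul]
  congr 1
  ring

theorem setLIntegral_inner_pos_rpow_mul_exp {n : ℕ} (hn : Module.finrank ℝ E = n + 1) {e : E}
    (he : ‖e‖ = 1) {s : ℝ} (hs : 0 < s) :
    ∫⁻ y in {y : E | 0 < ⟪e, y⟫_ℝ},
        ENNReal.ofReal (⟪e, y⟫_ℝ ^ (s - 1) * Real.exp (-(‖y‖ ^ 2 / ⟪e, y⟫_ℝ))) =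
      ENNReal.ofReal (Real.pi ^ (n / 2 : ℝ) * Real.Gamma (s + n / 2)) := by
  have hm : MeasurableSet {y : E | 0 < ⟪e, y⟫_ℝ} := measurableSet_lt (by fun_prop) (by fun_prop)
  have : Fact (Module.finrank ℝ E = n + 1) := ⟨hn⟩
  have hrank : Module.finrank ℝ (ℝ ∙ e)ᗮ = n :=
    Submodule.finrank_orthogonal_span_singleton (norm_ne_zero_iff.1 (by simp [he]))
  have hinner (u : ℝ) (z : (ℝ ∙ e)ᗮ) : ⟪e, u • e + z⟫_ℝ = u := by
    rw [inner_add_right, inner_smul_right, real_inner_self_eq_norm_sq, he,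
      Submodule.mem_orthogonal_singleton_iff_inner_right.1 z.2]
    ring
  have hnorm (u : ℝ) (z : (ℝ ∙ e)ᗮ) : ‖u • e + z‖ ^ 2 = u ^ 2 + ‖z‖ ^ 2 := by
    rw [norm_add_sq_real, inner_smul_left,
      Submodule.mem_orthogonal_singleton_iff_inner_right.1 z.2, norm_smul, he]
    simp
  rw [← lintegral_indicator hm, lintegral_eq_lintegral_lintegral_orthogonal_span_singleton he
    (Measurable.indicator (by fun_prop) hm)]
  calc _ = ∫⁻ u in Set.Ioi (0 : ℝ), ENNReal.ofReal (Real.pi ^ (n / 2 : ℝ) *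
        (u ^ (s + n / 2 - 1) * Real.exp (-(1 * u)))) := by
        rw [← lintegral_indicator measurableSet_Ioi]
        refine lintegral_congr fun u => ?_
        by_cases hu : 0 < u
        · rw [Set.indicator_of_mem (Set.mem_Ioi.2 hu), ← hrank,
            ← lintegral_rpow_mul_exp_neg_add_sq_norm_div hu]
          simp [Set.indicator, hinner, hnorm, hu]
        · simp [Set.indicator, hinner, hu]
    _ = _ := by
        simp only [ENNReal.ofReal_mul (show 0 ≤ Real.pi ^ (n / 2 : ℝ) by positivity)]
        rw [lintegral_const_mul _ (by fun_prop),
          lintegral_rpow_mul_exp_neg_mul_Ioi (by positivity) one_pos]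
        simp

theorem lintegral_eq_lintegral_sphere_setLIntegral_Ioi {n : ℕ} (hn : Module.finrank ℝ E = n + 1)
    {g : E → ℝ≥0∞} (hg : Measurable g) :
    ∫⁻ x, g x = ∫⁻ ξ : sphere (0 : E) 1, (∫⁻ r in Set.Ioi (0 : ℝ),
      ENNReal.ofReal (r ^ n) * g (r • (ξ : E))) ∂(volume : Measure E).toSphere := by
  have : Nontrivial E := Module.nontrivial_of_finrank_eq_succ hn
  rw [lintegral_eq_lintegral_sphere_lintegral_Ioi hg, hn, Nat.add_sub_cancel]
  exact lintegral_congr fun ξ => lintegral_volumeIoiPow n (h := fun r => g (r • (ξ : E)))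
    (by fun_prop)

theorem lintegral_one_add_inner_rpow_mul {n : ℕ} (hn : Module.finrank ℝ E = n + 1) {e : E}
    (he : ‖e‖ = 1) {s : ℝ} (hs : 0 < s) :
    (∫⁻ ξ : sphere (0 : E) 1, ENNReal.ofReal ((1 + ⟪e, (ξ : E)⟫_ℝ) ^ s)
      ∂(volume : Measure E).toSphere) * ENNReal.ofReal ((1 / 2) ^ (n + s) * Real.Gamma (n + s)) =
      ∫⁻ y in {y : E | 0 < ⟪e, y⟫_ℝ},
        ENNReal.ofReal (⟪e, y⟫_ℝ ^ (s - 1) * Real.exp (-(‖y‖ ^ 2 / ⟪e, y⟫_ℝ))) := by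
  have hmeas : Measurable (normShear e) := by
    unfold normShear
    fun_prop
  rw [setLIntegral_inner_pos_eq_lintegral_normShear he,
    lintegral_eq_lintegral_sphere_setLIntegral_Ioi hn (by fun_prop),
    ← lintegral_mul_const _ (by fun_prop)]
  refine lintegral_congr fun ξ => ?_
  rw [← lintegral_rpow_mul_exp_neg_mul_Ioi (by positivity) two_pos,
    ← lintegral_const_mul _ (by fun_prop)]
  refine setLIntegral_congr_fun measurableSet_Ioi fun r (hr : 0 < r) => ?_
  have hξ : 0 ≤ 1 + ⟪e, (ξ : E)⟫_ℝ := by simpa using norm_add_inner_nonneg he (ξ : E)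
  simp only [inner_normShear he, norm_normShear_sq he, inner_smul_right, norm_smul,
    norm_eq_of_mem_sphere, Real.norm_of_nonneg hr.le, ← mul_add]
  rcases hξ.eq_or_lt with hξ | hξ
  · simp [← hξ, Real.zero_rpow hs.ne']
  · rw [← ENNReal.ofReal_mul (by positivity), ← ENNReal.ofReal_mul (by positivity),
      ← ENNReal.ofReal_mul (by positivity), mul_div_cancel_right₀ _ (by positivity),
      Real.mul_rpow hr.le hξ.le, Real.rpow_sub_one hξ.ne', add_sub_assoc, Real.rpow_add hr,
      Real.rpow_natCast]
    congr 1
    field_simp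

theorem integral_one_add_inner_rpow {n : ℕ} (hn : Module.finrank ℝ E = n + 1) {e : E}
    (he : ‖e‖ = 1) {s : ℝ} (hs : 0 < s) :
    ∫ ξ : sphere (0 : E) 1, (1 + ⟪e, (ξ : E)⟫_ℝ) ^ s ∂(volume : Measure E).toSphere =
      2 ^ (n + s) * Real.pi ^ (n / 2 : ℝ) * Real.Gamma (s + n / 2) / Real.Gamma (n + s) := by
  have := Real.Gamma_pos_of_pos (by positivity : 0 < n + s)
  have := Real.Gamma_pos_of_pos (by positivity : 0 < s + n / 2)
  have h := congrArg ENNReal.toReal ((lintegral_one_add_inner_rpow_mul hn he hs).trans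
    (setLIntegral_inner_pos_rpow_mul_exp hn he hs))
  rw [ENNReal.toReal_mul, ENNReal.toReal_ofReal (by positivity),
    ENNReal.toReal_ofReal (by positivity), one_div, Real.inv_rpow zero_le_two] at h
  rw [integral_eq_lintegral_of_nonneg_ae (ae_of_all _ fun ξ => Real.rpow_nonneg ?_ _)
    (Measurable.aestronglyMeasurable (by fun_prop)), mul_assoc, ← h]
  · field_simp
  · simpa using norm_add_inner_nonneg he (ξ : E)

theorem integral_dist_rpow {n : ℕ} (hn : Module.finrank ℝ E = n + 1) {s : ℝ} (hs : 0 < s)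
    (ξ : sphere (0 : E) 1) :
    ∫ η, dist ξ η ^ s ∂(volume : Measure E).toSphere =
      2 ^ (n + s) * Real.pi ^ (n / 2 : ℝ) * Real.Gamma ((n + s) / 2) / Real.Gamma (n + s / 2) := by
  have hξ : ‖-(ξ : E)‖ = 1 := by simp
  have hdist (η : sphere (0 : E) 1) :
      dist ξ η ^ s = 2 ^ (s / 2) * (1 + ⟪-(ξ : E), (η : E)⟫_ℝ) ^ (s / 2) := by
    have hsq : dist ξ η ^ 2 = 2 * (1 + ⟪-(ξ : E), (η : E)⟫_ℝ) := by
      rw [Subtype.dist_eq, dist_eq_norm, norm_sub_sq_real, inner_neg_left]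
      simp only [norm_eq_of_mem_sphere]
      ring
    rw [← Real.mul_rpow zero_le_two (by simpa using norm_add_inner_nonneg hξ (η : E)), ← hsq,
      ← Real.rpow_natCast_mul dist_nonneg, Nat.cast_two, mul_div_cancel₀ _ two_ne_zero]
  simp only [hdist]
  rw [integral_const_mul, integral_one_add_inner_rpow hn hξ (half_pos hs), ← add_div, add_comm s,
    show (n : ℝ) + s = s / 2 + (n + s / 2) by ring, Real.rpow_add two_pos (s / 2)]
  ring

theorem toSphere_real_univ {n : ℕ} (hn : Module.finrank ℝ E = n + 1) (hn0 : n ≠ 0) :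
    (volume : Measure E).toSphere.real Set.univ =
      2 ^ (n : ℝ) * Real.pi ^ (n / 2 : ℝ) * (Real.Gamma (n / 2) / Real.Gamma n) := by
  have : Nontrivial E := Module.nontrivial_of_finrank_eq_succ hn
  have hn0 : (0 : ℝ) < n := by positivity
  have := Real.Gamma_pos_of_pos hn0
  have := Real.Gamma_pos_of_pos (by positivity : 0 < ((n : ℝ) + 1) / 2)
  have duplication : Real.Gamma (n / 2) * Real.Gamma ((n + 1) / 2) * 2 ^ (n : ℝ) =
      2 * Real.Gamma n * √Real.pi := by
    rw [add_div, Real.Gamma_mul_Gamma_add_half, mul_div_cancel₀ _ two_ne_zero,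
      Real.rpow_sub two_pos, Real.rpow_one]
    field_simp
  have hpi : √Real.pi ^ (n + 1) = Real.pi ^ (n / 2 : ℝ) * √Real.pi := by
    rw [pow_succ, Real.sqrt_eq_rpow, ← Real.rpow_mul_natCast Real.pi_pos.le, one_div_mul_eq_div]
  rw [Measure.real, Measure.toSphere_apply_univ, InnerProductSpace.volume_ball, hn,
    ENNReal.ofReal_one, one_pow, one_mul, ENNReal.toReal_mul, ENNReal.toReal_natCast, Nat.cast_succ,
    Real.Gamma_add_one (by positivity), ENNReal.toReal_ofReal (by positivity), hpi]
  field_simp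
  linear_combination -duplication

end SphereMoment

section SharpConstantValue

/-- The best constant `N*(n, α)` of the reversed Hardy–Littlewood–Sobolev inequality on `𝕊ⁿ`. -/
noncomputable def sharpConstant (n : ℕ) (α : ℝ) : ℝ :=
  Real.pi ^ ((n - α) / 2) * (Real.Gamma (α / 2) / Real.Gamma ((n + α) / 2)) *
    (Real.Gamma (n / 2) / Real.Gamma n) ^ (-(α / n))

theorem sharpConstant_pos {n : ℕ} (hn0 : n ≠ 0) {α : ℝ} (hα : 0 < α) :
    0 < sharpConstant n α := by
  have := Real.Gamma_pos_of_pos (by positivity : 0 < (n : ℝ))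
  have := Real.Gamma_pos_of_pos (by positivity : 0 < (n : ℝ) / 2)
  have := Real.Gamma_pos_of_pos (by positivity : 0 < α / 2)
  have := Real.Gamma_pos_of_pos (by positivity : 0 < (n + α) / 2)
  unfold sharpConstant
  positivity

theorem integral_dist_rpow_mul_toSphere_real_univ_rpow {E : Type*} [NormedAddCommGroup E]
    [InnerProductSpace ℝ E] [FiniteDimensional ℝ E] [MeasurableSpace E] [BorelSpace E] {n : ℕ}
    (hn : Module.finrank ℝ E = n + 1) (hn0 : n ≠ 0) {s : ℝ} (hs : 0 < s) (ξ : sphere (0 : E) 1) :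
    (∫ η, dist ξ η ^ s ∂(volume : Measure E).toSphere) *
      (volume : Measure E).toSphere.real Set.univ ^ (-((n + s) / n)) = sharpConstant n (n + s) := by
  have hn' : (n : ℝ) ≠ 0 := by positivity
  have := Real.Gamma_pos_of_pos (by positivity : 0 < (n : ℝ))
  have := Real.Gamma_pos_of_pos (by positivity : 0 < (n : ℝ) / 2)
  rw [integral_dist_rpow hn hs, toSphere_real_univ hn hn0, Real.mul_rpow (by positivity)
    (by positivity), Real.mul_rpow (by positivity) (by positivity), ← Real.rpow_mul zero_le_two,
    ← Real.rpow_mul Real.pi_pos.le, mul_neg, mul_div_cancel₀ _ hn', Real.rpow_neg zero_le_two,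
    sharpConstant, show (n : ℝ) + s / 2 = (n + (n + s)) / 2 by ring,
    show ((n : ℝ) - (n + s)) / 2 = n / 2 + n / 2 * -((n + s) / n) by field_simp; ring,
    Real.rpow_add Real.pi_pos]
  field_simp

end SharpConstantValue
section ExtendedNorm

open Filter Topology

variable {X : Type*} [MeasurableSpace X] {μ : Measure X}

/-- The `ℝ≥0∞`-valued counterpart of `rpowNorm`, defined without any integrability assumption. -/
noncomputable def lrpowNorm (μ : Measure X) (r : ℝ) (f : X → ℝ≥0∞) : ℝ≥0∞ :=
  (∫⁻ x, f x ^ r ∂μ) ^ (1 / r)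

theorem ennreal_rpow_le_rpow_of_nonpos {r : ℝ} (hr : r ≤ 0) {x y : ℝ≥0∞} (h : x ≤ y) :
    y ^ r ≤ x ^ r := by
  simpa only [← ENNReal.rpow_neg, neg_neg] using
    ENNReal.inv_le_inv.2 (ENNReal.rpow_le_rpow h (neg_nonneg.2 hr))

theorem lrpowNorm_mono (r : ℝ) {f g : X → ℝ≥0∞} (h : ∀ x, f x ≤ g x) :
    lrpowNorm μ r f ≤ lrpowNorm μ r g := by
  rcases le_total 0 r with hr | hr
  · exact ENNReal.rpow_le_rpow (lintegral_mono fun x => ENNReal.rpow_le_rpow (h x) hr)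
      (one_div_nonneg.2 hr)
  · exact ennreal_rpow_le_rpow_of_nonpos (one_div_nonpos.2 hr)
      (lintegral_mono fun x => ennreal_rpow_le_rpow_of_nonpos hr (h x))

theorem tendsto_lrpowNorm {r : ℝ} {f : ℕ → X → ℝ≥0∞} {g : X → ℝ≥0∞} (hf : ∀ j, Measurable (f j))
    (hmono : ∀ x, Monotone fun j => f j x ^ r)
    (hlim : ∀ x, Tendsto (fun j => f j x) atTop (𝓝 (g x))) :
    Tendsto (fun j => lrpowNorm μ r (f j)) atTop (𝓝 (lrpowNorm μ r g)) :=
  (ENNReal.continuous_rpow_const.tendsto _).comp <|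
    lintegral_tendsto_of_tendsto_of_monotone (fun j => ((hf j).pow_const r).aemeasurable)
      (ae_of_all _ hmono)
      (ae_of_all _ fun x => (ENNReal.continuous_rpow_const.tendsto _).comp (hlim x))

theorem tendsto_lrpowNorm_min_natCast {r : ℝ} (hr : 0 ≤ r) {F : X → ℝ} (hF : Measurable F) :
    Tendsto (fun j : ℕ => lrpowNorm μ r fun x => ENNReal.ofReal (min (F x) j)) atTop
      (𝓝 (lrpowNorm μ r fun x => ENNReal.ofReal (F x))) := by
  refine tendsto_lrpowNorm (fun j => (hF.min measurable_const).ennreal_ofReal)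
    (fun x i j hij => ?_) fun x => ENNReal.tendsto_ofReal (tendsto_const_nhds.congr' ?_)
  · have : (i : ℝ) ≤ j := by exact_mod_cast hij
    exact ENNReal.rpow_le_rpow (by gcongr) hr
  · filter_upwards [tendsto_natCast_atTop_atTop.eventually_ge_atTop (F x)] with j hj
    exact (min_eq_left hj).symm

theorem lrpowNorm_ofReal [IsFiniteMeasure μ] [NeZero μ] (r : ℝ) {F : X → ℝ} (hF : IsPinched F) :
    lrpowNorm μ r (fun x => ENNReal.ofReal (F x)) = ENNReal.ofReal (rpowNorm μ r F) := by
  rw [rpowNorm, ← ENNReal.ofReal_rpow_of_pos ((hF.rpow r).integral_pos μ),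
    ofReal_integral_eq_lintegral_ofReal ((hF.rpow r).integrable μ)
      (ae_of_all _ fun x => ((hF.rpow r).pos x).le)]
  simp only [lrpowNorm, ENNReal.ofReal_rpow_of_pos (hF.pos _)]

theorem ofReal_integral_rpow_rpow_one_div {r : ℝ} (hr : 0 ≤ r) {F : X → ℝ} (hF : ∀ x, 0 ≤ F x)
    (hint : Integrable (fun x => F x ^ r) μ) :
    ENNReal.ofReal ((∫ x, F x ^ r ∂μ) ^ (1 / r)) =
      lrpowNorm μ r fun x => ENNReal.ofReal (F x) := by
  have hFr (x : X) : 0 ≤ F x ^ r := Real.rpow_nonneg (hF x) r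
  rw [← ENNReal.ofReal_rpow_of_nonneg (integral_nonneg hFr) (one_div_nonneg.2 hr),
    ofReal_integral_eq_lintegral_ofReal hint (ae_of_all _ hFr)]
  simp only [lrpowNorm, ENNReal.ofReal_rpow_of_nonneg (hF _) hr]

end ExtendedNorm

section Approximation

open Filter Topology

variable {X : Type*} [TopologicalSpace X] [MeasurableSpace X] {μ : Measure X} {K : C(X × X, ℝ)}
  {F G : X → ℝ}

/-- The `ℝ≥0∞`-valued counterpart of `potential`, defined without any integrability assumption. -/
noncomputable def lpotential (μ : Measure X) (K : C(X × X, ℝ)) (F : X → ℝ) (x : X) : ℝ≥0∞ :=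
  ∫⁻ y, ENNReal.ofReal (F y * K (x, y)) ∂μ

theorem lpotential_mono (hK : ∀ z, 0 ≤ K z) (h : ∀ y, F y ≤ G y) (x : X) :
    lpotential μ K F x ≤ lpotential μ K G x :=
  lintegral_mono fun y => ENNReal.ofReal_le_ofReal (mul_le_mul_of_nonneg_right (h y) (hK _))

variable [BorelSpace X]

theorem lpotential_add_const (hK : ∀ z, 0 ≤ K z) (hF : ∀ y, 0 ≤ F y) {c : ℝ} (hc : 0 ≤ c)
    (x : X) :
    lpotential μ K (fun y => F y + c) x =
      lpotential μ K F x + ENNReal.ofReal c * lpotential μ K (fun _ => 1) x := by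
  have hKx : Measurable fun y => ENNReal.ofReal (K (x, y)) :=
    (K.curry x).measurable.ennreal_ofReal
  simp only [lpotential, add_mul, one_mul, ENNReal.ofReal_add (mul_nonneg (hF _) (hK _))
    (mul_nonneg hc (hK _)), ENNReal.ofReal_mul hc]
  rw [lintegral_add_right _ (hKx.const_mul _), lintegral_const_mul _ hKx]

theorem measurable_lpotential [SecondCountableTopology X] [SFinite μ] (hF : Measurable F) :
    Measurable (lpotential μ K F) :=
  Measurable.lintegral_prod_right' (f := fun z : X × X => ENNReal.ofReal (F z.2 * K z))
    ((hF.comp measurable_snd).mul K.measurable).ennreal_ofReal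

variable [CompactSpace X] [IsFiniteMeasure μ]

theorem lpotential_eq_ofReal_potential (hK : ∀ z, 0 ≤ K z) (hF : IsPinched F) (x : X) :
    lpotential μ K F x = ENNReal.ofReal (potential μ K F x) := by
  rw [potential, ofReal_integral_eq_lintegral_ofReal (hF.integrable_kernel_mul K x)
    (ae_of_all _ fun y => mul_nonneg (hK _) (hF.pos y).le)]
  simp only [lpotential, mul_comm]

theorem tendsto_lpotential_add_const_mul (hK : ∀ z, 0 ≤ K z) (F : X → ℝ) (x : X) :
    Tendsto (fun j : ℕ => lpotential μ K F x +
      ENNReal.ofReal (1 / ((j : ℝ) + 1)) * lpotential μ K (fun _ => 1) x) atTop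
      (𝓝 (lpotential μ K F x)) := by
  have hfin : lpotential μ K (fun _ => 1) x ≠ ∞ := by
    rw [lpotential_eq_ofReal_potential hK (.const one_pos)]
    exact ENNReal.ofReal_ne_top
  have h := ENNReal.Tendsto.mul_const (ENNReal.tendsto_ofReal
    (tendsto_one_div_add_atTop_nhds_zero_nat (𝕜 := ℝ))) (.inr hfin)
  simpa using h.const_add (lpotential μ K F x)

theorem tendsto_lrpowNorm_lpotential_add_const_mul [SecondCountableTopology X] {r : ℝ}
    (hr : r ≤ 0) (hK : ∀ z, 0 ≤ K z) (hF : Measurable F) :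
    Tendsto (fun j : ℕ => lrpowNorm μ r fun x => lpotential μ K F x +
      ENNReal.ofReal (1 / ((j : ℝ) + 1)) * lpotential μ K (fun _ => 1) x) atTop
      (𝓝 (lrpowNorm μ r (lpotential μ K F))) := by
  refine tendsto_lrpowNorm (fun j => (measurable_lpotential hF).add
    ((measurable_lpotential measurable_const).const_mul _)) (fun x i j hij => ?_)
    (tendsto_lpotential_add_const_mul hK F)
  refine ennreal_rpow_le_rpow_of_nonpos hr ?_
  gcongr

theorem mul_lrpowNorm_le_lrpowNorm_lpotential [SecondCountableTopology X] [NeZero μ] {p C : ℝ}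
    (hp : p ∈ Set.Ioo 0 1) (hC : 0 ≤ C) (hK : ∀ z, 0 ≤ K z)
    (hpos : ∀ x, 0 < ∫ y, K (x, y) ∂μ)
    (h : ∀ ⦃F G : X → ℝ⦄, IsPinched F → IsPinched G →
      C * (rpowNorm μ p F * rpowNorm μ p G) ≤ energy μ K F G)
    (hF : Measurable F) (hF0 : ∀ x, 0 ≤ F x) :
    ENNReal.ofReal C * lrpowNorm μ p (fun x => ENNReal.ofReal (F x)) ≤
      lrpowNorm μ p.conjExponent (lpotential μ K F) := by
  have hq : p.conjExponent ≤ 0 := div_nonpos_of_nonneg_of_nonpos hp.1.le (by linarith [hp.2])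
  refine le_of_tendsto_of_tendsto' (ENNReal.Tendsto.const_mul
    (tendsto_lrpowNorm_min_natCast hp.1.le hF) (.inr ENNReal.ofReal_ne_top))
    (tendsto_lrpowNorm_lpotential_add_const_mul hq hK hF) fun j => ?_
  set ε : ℝ := 1 / (j + 1)
  have hε : 0 < ε := by positivity
  have hmin (x : X) : 0 ≤ min (F x) j := le_min (hF0 x) j.cast_nonneg
  have hpin : IsPinched fun x => min (F x) j + ε :=
    ⟨(hF.min measurable_const).add_const ε, ε, hε, j + ε, by positivity, fun x =>
      ⟨le_add_of_nonneg_left (hmin x), add_le_add_left (min_le_right _ _) ε⟩⟩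
  have hpot := hpin.potential hK hpos
  calc ENNReal.ofReal C * lrpowNorm μ p (fun x => ENNReal.ofReal (min (F x) j))
      ≤ ENNReal.ofReal C * lrpowNorm μ p (fun x => ENNReal.ofReal (min (F x) j + ε)) := by
        gcongr
        exact lrpowNorm_mono p fun x =>
          ENNReal.ofReal_le_ofReal (le_add_of_nonneg_right hε.le)
    _ ≤ lrpowNorm μ p.conjExponent (lpotential μ K fun x => min (F x) j + ε) := by
        simp only [funext (lpotential_eq_ofReal_potential hK hpin), lrpowNorm_ofReal _ hpin,
          lrpowNorm_ofReal _ hpot, ← ENNReal.ofReal_mul hC]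
        exact ENNReal.ofReal_le_ofReal (mul_rpowNorm_le_rpowNorm_potential hp h hpin hpot)
    _ ≤ _ := lrpowNorm_mono _ fun x => by
        rw [← lpotential_add_const hK hF0 hε.le]
        exact lpotential_mono hK (fun y => add_le_add_left (min_le_left _ _) ε) x

end Approximation

section Sphere

variable {E : Type*} [NormedAddCommGroup E] [InnerProductSpace ℝ E] [FiniteDimensional ℝ E]
  [MeasurableSpace E] [BorelSpace E]

local notation "𝕊" => sphere (0 : E) 1
local notation "σ" => Measure.toSphere (volume : Measure E)

theorem sharpConstant_mul_lrpowNorm_le {n : ℕ} (hn : Module.finrank ℝ E = n + 1) (hn0 : n ≠ 0)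
    {s p : ℝ} (hs : 0 < s) (hp : p ∈ Set.Ioo 0 1) (hps : p * (n + s / 2) = n) {F : 𝕊 → ℝ}
    (hF : Measurable F) (hF0 : ∀ ξ, 0 ≤ F ξ) :
    ENNReal.ofReal (sharpConstant n (n + s)) * lrpowNorm σ p (fun ξ => ENNReal.ofReal (F ξ)) ≤
      lrpowNorm σ p.conjExponent (lpotential σ (distKernel 𝕊 hs) F) := by
  have : Nontrivial E := Module.nontrivial_of_finrank_eq_succ hn
  have : NeZero σ := ⟨Measure.toSphere_ne_zero _⟩
  have hn' : (n : ℝ) ≠ 0 := by positivity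
  obtain ⟨ξ₀⟩ : Nonempty 𝕊 := (Measure.toSphere (volume : Measure E)).nonempty_of_neZero
  set A : ℝ := ∫ η, dist ξ₀ η ^ s ∂σ
  have hA (ξ : 𝕊) : A ≤ ∫ η, dist ξ η ^ s ∂σ := by
    rw [integral_dist_rpow hn hs, ← integral_dist_rpow hn hs ξ₀]
  have hexp : -((n + s) / n) = 1 / p.conjExponent - 1 / p := by
    have := hp.1.ne'
    rw [one_div_conjExponent]
    field_simp
    linarith
  have hconst : A * Measure.real σ Set.univ ^ (1 / p.conjExponent - 1 / p) =
      sharpConstant n (n + s) := by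
    rw [← hexp, integral_dist_rpow_mul_toSphere_real_univ_rpow hn hn0 hs ξ₀]
  have hN : 0 < sharpConstant n (n + s) := sharpConstant_pos hn0 (by positivity)
  have hA0 : 0 < A := pos_of_mul_pos_left (hconst ▸ hN) (by positivity)
  exact mul_lrpowNorm_le_lrpowNorm_lpotential hp hN.le (fun _ => Real.rpow_nonneg dist_nonneg s)
    (fun ξ => hA0.trans_le (hA ξ))
    (fun _ _ hF hG => hconst ▸ mul_rpowNorm_mul_rpowNorm_le_energy hn hs hp hps hA0.le hA hF hG)
    hF hF0

end Sphere

end ReversedHLS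

/-- **Sharp reversed HLS inequality on the sphere** (Theorem 1.2, inequality part):
for `1 ≤ n < α`, `p = 2n/(n+α)`, `q = 2n/(n-α)`, every nonnegative `F ∈ L^p(𝕊ⁿ)` satisfies
`‖Ĩ_α F‖_{L^q(𝕊ⁿ)} ≥ N*(n,α) ‖F‖_{L^p(𝕊ⁿ)}` with
`N*(n,α) = π^((n-α)/2) Γ(α/2)/Γ((n+α)/2) (Γ(n/2)/Γ(n))^(-α/n)`. -/
theorem sharp_reversed_HLS_sphere (n : ℕ) (hn : 1 ≤ n) (α p q : ℝ)
    (hα : (n : ℝ) < α)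
    (hp : p = 2 * n / ((n : ℝ) + α)) (hq : q = 2 * n / ((n : ℝ) - α)) :
    ∀ F : sphere (0 : EuclideanSpace ℝ (Fin (n + 1))) 1 → ℝ,
      Measurable F → (∀ ξ, 0 ≤ F ξ) →
      Integrable (fun ξ => |F ξ| ^ p) (sphereMeasure n) →
      ENNReal.ofReal
          ((Real.pi ^ (((n : ℝ) - α) / 2) * (Real.Gamma (α / 2) / Real.Gamma (((n : ℝ) + α) / 2)) *
              (Real.Gamma ((n : ℝ) / 2) / Real.Gamma (n : ℝ)) ^ (-(α / (n : ℝ)))) *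
            (∫ ξ, |F ξ| ^ p ∂(sphereMeasure n)) ^ (1 / p)) ≤
        (∫⁻ ξ, (sphereRiesz n α F ξ) ^ q ∂(sphereMeasure n)) ^ (1 / q) := by
  intro F hF hF0 hint
  have hn0 : (0 : ℝ) < n := by exact_mod_cast hn
  have hsum : (n : ℝ) + α ≠ 0 := by linarith
  have hp01 : p ∈ Set.Ioo 0 1 := by
    rw [hp]
    exact ⟨div_pos (by linarith) (by linarith), (div_lt_one (by linarith)).2 (by linarith)⟩
  have hps : p * (n + (α - n) / 2) = n := by
    rw [hp]
    field_simp
    ring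
  have hconj : p.conjExponent = q := by
    rw [Real.conjExponent, hp, hq, div_sub_one hsum, div_div_div_cancel_right₀ hsum]
    ring
  simp only [abs_of_nonneg (hF0 _)] at hint ⊢
  have key := ReversedHLS.sharpConstant_mul_lrpowNorm_le (by simp) (Nat.one_le_iff_ne_zero.1 hn)
    (sub_pos.2 hα) hp01 hps hF hF0
  rw [hconj, add_sub_cancel] at key
  change ENNReal.ofReal (ReversedHLS.sharpConstant n α * _) ≤ _
  rwa [ENNReal.ofReal_mul (ReversedHLS.sharpConstant_pos (by omega) (hn0.trans hα)).le,
    ReversedHLS.ofReal_integral_rpow_rpow_one_div hp01.1.le hF0 hint]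
end
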